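/- arXiv:2211.03574 — 2 statements merged into one kernel-verified Lean document; each statement's English description precedes it below -/
import Mathlib

section
/- Fix 0 ≤ L₀ < L < L̃, ρ > 0, T > 0, m ∈ (0,1) with mT < √ρ(L̃ − L)/2, and parameters μ, τ ≥ 1. Define r(x,t) = (x − L̃)² − m(t − T/2)², η = e^{μr}, q = τη, θ = e^{q}, and Pv = v_{ttx} − ρ v_{xxx}. Define B₁ = 3ρq_x, B₂ = −3ρq_x² + q_t², B₃ = −q_x, B₄ = −2q_t, B₅ = 2q_x q_t, B₆ = −q_x q_t² + ρ q_x³, S₂ = 3ρq_xx − q_tt, S₅ = −2q_tx, S₆ = ρq_xxx − 3ρq_x q_xx − q_ttx + 2q_t q_tx + q_x q_tt, and for a smooth function w set I₁(w) = −ρ w_{xxx} + w_{ttx} + B₂ w_x + B₅ w_t and I₂(w) = B₁ w_{xx} + B₄ w_{tx} + B₃ w_{tt} + B₆ w. Then for every smooth v on [L₀,L]×[0,T], writing ṽ = θv, one has pointwise θ Pv = I₁(ṽ) + I₂(ṽ) + S₂ ṽ_x + S₅ ṽ_t + S₆ ṽ; moreover there exist μ₀ ≥ 1 and C > 0 (depending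 only on ρ, m, T, L₀, L, L̃) such that for all μ ≥ μ₀, τ ≥ 1 and all smooth v: 2 ∫₀^T ∫_{L₀}^{L} I₁(ṽ) I₂(ṽ) dx dt ≤ C ( ∫₀^T ∫_{L₀}^{L} θ² (Pv)² dx dt + τ²μ⁴ ∫₀^T ∫_{L₀}^{L} (ṽ_x² + ṽ_t²) η² dx dt + τ⁴μ⁶ ∫₀^T ∫_{L₀}^{L} ṽ² η² dx dt ). -/
open MeasureTheory

noncomputable section

/-- Partial derivative in the first (space) variable. -/
def pdx (f : ℝ → ℝ → ℝ) : ℝ → ℝ → ℝ := fun x t => deriv (fun y => f y t) x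

/-- Partial derivative in the second (time) variable. -/
def pdt (f : ℝ → ℝ → ℝ) : ℝ → ℝ → ℝ := fun x t => deriv (fun s => f x s) t

/-- The Carleman weight `η(x,t) = exp(μ((x − L̃)² − m(t − T/2)²))`. -/
def carEta (Lt T m μ : ℝ) : ℝ → ℝ → ℝ := fun x t =>
  Real.exp (μ * ((x - Lt) ^ 2 - m * (t - T / 2) ^ 2))

/-- `q = τη`. -/
def carQ (Lt T m μ τ : ℝ) : ℝ → ℝ → ℝ := fun x t => τ * carEta Lt T m μ x t

/-- `θ = e^q`. -/
def carTheta (Lt T m μ τ : ℝ) : ℝ → ℝ → ℝ := fun x t => Real.exp (carQ Lt T m μ τ x t)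

/-- The third-order operator `Pv = v_ttx − ρ v_xxx`. -/
def carP (ρ : ℝ) (v : ℝ → ℝ → ℝ) : ℝ → ℝ → ℝ := fun x t =>
  pdx (pdt (pdt v)) x t - ρ * pdx (pdx (pdx v)) x t

/-- `I₁(w) = −ρ w_xxx + w_ttx + B₂ w_x + B₅ w_t` with
`B₂ = −3ρq_x² + q_t²`, `B₅ = 2q_x q_t`. -/
def carI1 (ρ Lt T m μ τ : ℝ) (w : ℝ → ℝ → ℝ) : ℝ → ℝ → ℝ := fun x t =>
  -ρ * pdx (pdx (pdx w)) x t + pdx (pdt (pdt w)) x t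
    + (-(3 * ρ * (pdx (carQ Lt T m μ τ) x t) ^ 2) + (pdt (carQ Lt T m μ τ) x t) ^ 2)
        * pdx w x t
    + (2 * pdx (carQ Lt T m μ τ) x t * pdt (carQ Lt T m μ τ) x t) * pdt w x t

/-- `I₂(w) = B₁ w_xx + B₄ w_tx + B₃ w_tt + B₆ w` with `B₁ = 3ρq_x`, `B₄ = −2q_t`,
`B₃ = −q_x`, `B₆ = −q_x q_t² + ρ q_x³`. -/
def carI2 (ρ Lt T m μ τ : ℝ) (w : ℝ → ℝ → ℝ) : ℝ → ℝ → ℝ := fun x t =>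
  (3 * ρ * pdx (carQ Lt T m μ τ) x t) * pdx (pdx w) x t
    + (-(2 * pdt (carQ Lt T m μ τ) x t)) * pdx (pdt w) x t
    + (-(pdx (carQ Lt T m μ τ) x t)) * pdt (pdt w) x t
    + (-(pdx (carQ Lt T m μ τ) x t) * (pdt (carQ Lt T m μ τ) x t) ^ 2
        + ρ * (pdx (carQ Lt T m μ τ) x t) ^ 3) * w x t

/-- `S(w) = S₂ w_x + S₅ w_t + S₆ w` with `S₂ = 3ρq_xx − q_tt`, `S₅ = −2q_tx`,
`S₆ = ρq_xxx − 3ρ q_x q_xx − q_ttx + 2 q_t q_tx + q_x q_tt`. -/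
def carS (ρ Lt T m μ τ : ℝ) (w : ℝ → ℝ → ℝ) : ℝ → ℝ → ℝ := fun x t =>
  (3 * ρ * pdx (pdx (carQ Lt T m μ τ)) x t - pdt (pdt (carQ Lt T m μ τ)) x t) * pdx w x t
    + (-(2 * pdx (pdt (carQ Lt T m μ τ)) x t)) * pdt w x t
    + (ρ * pdx (pdx (pdx (carQ Lt T m μ τ))) x t
        - 3 * ρ * pdx (carQ Lt T m μ τ) x t * pdx (pdx (carQ Lt T m μ τ)) x t
        - pdx (pdt (pdt (carQ Lt T m μ τ))) x t
        + 2 * pdt (carQ Lt T m μ τ) x t * pdx (pdt (carQ Lt T m μ τ)) x t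
        + pdx (carQ Lt T m μ τ) x t * pdt (pdt (carQ Lt T m μ τ)) x t) * w x t

end

/-!
Let `w = θv` and `σ = μq`. Since `θPv = I₁ + I₂ + S`,
`2 I₁ I₂ ≤ 2 θ² (Pv)² + 2 S² - I₂²`.
The squares of `μσw_x`, `μσw_t` and `μ²σw` are integrands of the right-hand side of the
estimate, but `S₆ w` also contains a term of the size of `μσ²w`, whose square carries `η⁴`
instead of `η²`. It is absorbed by `-I₂²`: the zero-order coefficient of `I₂` is `-E σ³`, and the
condition on `mT` makes `E` positive, so multiplying `I₂` by `μ²σχw` and integrating by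
parts bounds `∫∫ χ (μσ²w)²` by products of lower-order quantities with `I₂`, `μσ²w` and each other.

As `v` satisfies no boundary condition, the cutoff `χ` has to vanish on the boundary of the
rectangle. With `e = exp (-(y - A) (B - y) σ)` for each variable `y ∈ [A, B]`, one can take
`χ = (1 - e₁) (1 - e₂)`, because the layer `e (μσ²w)²` is, up to products of the same kind, the
derivative of the flux `(B - A)⁻² μ² σ³ (A + B - 2y) (1 - e) w²`, which vanishes at both end points.
-/

open Set
open scoped ContDiff

section PartialDerivatives

variable {f : ℝ → ℝ → ℝ}

lemma hasDerivAt_pdx (hf : ContDiff ℝ ∞ (Function.uncurry f)) (x t : ℝ) :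
    HasDerivAt (fun y => f y t) (pdx f x t) x :=
  have hsection : ContDiff ℝ ∞ fun y => f y t := by fun_prop
  (hsection.differentiable (by simp) x).hasDerivAt

lemma hasDerivAt_pdt (hf : ContDiff ℝ ∞ (Function.uncurry f)) (x t : ℝ) :
    HasDerivAt (fun s => f x s) (pdt f x t) t :=
  have hsection : ContDiff ℝ ∞ fun s => f x s := by fun_prop
  (hsection.differentiable (by simp) t).hasDerivAt

lemma contDiff_pdx (hf : ContDiff ℝ ∞ (Function.uncurry f)) :
    ContDiff ℝ ∞ (Function.uncurry (pdx f)) := by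
  have hfderiv : Function.uncurry (pdx f) = fun p => fderiv ℝ (Function.uncurry f) p (1, 0) := by
    ext ⟨x, t⟩
    exact ((hf.differentiable (by simp) (x, t)).hasFDerivAt.comp_hasDerivAt x
      ((hasDerivAt_id x).prodMk (hasDerivAt_const x t))).deriv
  rw [hfderiv]
  exact (hf.fderiv_right (m := ∞) (by simp)).clm_apply contDiff_const

lemma contDiff_pdt (hf : ContDiff ℝ ∞ (Function.uncurry f)) :
    ContDiff ℝ ∞ (Function.uncurry (pdt f)) := by
  have hfderiv : Function.uncurry (pdt f) = fun p => fderiv ℝ (Function.uncurry f) p (0, 1) := by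
    ext ⟨x, t⟩
    exact ((hf.differentiable (by simp) (x, t)).hasFDerivAt.comp_hasDerivAt t
      ((hasDerivAt_const t x).prodMk (hasDerivAt_id t))).deriv
  rw [hfderiv]
  exact (hf.fderiv_right (m := ∞) (by simp)).clm_apply contDiff_const

end PartialDerivatives

noncomputable section Conjugation

/-- The operator `w ↦ w_x − q_x w`, which is `∂ₓ` conjugated by `e^q`. -/
def conjDx (q w : ℝ → ℝ → ℝ) : ℝ → ℝ → ℝ := fun x t => pdx w x t - pdx q x t * w x t

/-- The operator `w ↦ w_t − q_t w`, which is `∂ₜ` conjugated by `e^q`. -/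
def conjDt (q w : ℝ → ℝ → ℝ) : ℝ → ℝ → ℝ := fun x t => pdt w x t - pdt q x t * w x t

variable {q v w : ℝ → ℝ → ℝ}

lemma conjDx_exp_mul (hq : ContDiff ℝ ∞ (Function.uncurry q))
    (hv : ContDiff ℝ ∞ (Function.uncurry v)) :
    conjDx q (fun x t => Real.exp (q x t) * v x t) = fun x t => Real.exp (q x t) * pdx v x t := by
  ext x t
  rw [conjDx, pdx, ((hasDerivAt_pdx hq x t).exp.fun_mul (hasDerivAt_pdx hv x t)).deriv]
  ring

lemma conjDt_exp_mul (hq : ContDiff ℝ ∞ (Function.uncurry q))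
    (hv : ContDiff ℝ ∞ (Function.uncurry v)) :
    conjDt q (fun x t => Real.exp (q x t) * v x t) = fun x t => Real.exp (q x t) * pdt v x t := by
  ext x t
  rw [conjDt, pdt, ((hasDerivAt_pdt hq x t).exp.fun_mul (hasDerivAt_pdt hv x t)).deriv]
  ring

lemma conjDx_conjDx (hq : ContDiff ℝ ∞ (Function.uncurry q))
    (hw : ContDiff ℝ ∞ (Function.uncurry w)) :
    conjDx q (conjDx q w) = fun x t => pdx (pdx w) x t - 2 * pdx q x t * pdx w x t
      + (pdx q x t ^ 2 - pdx (pdx q) x t) * w x t := by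
  ext x t
  have hderiv := (hasDerivAt_pdx (contDiff_pdx hw) x t).fun_sub
    ((hasDerivAt_pdx (contDiff_pdx hq) x t).fun_mul (hasDerivAt_pdx hw x t))
  rw [conjDx, show pdx (conjDx q w) x t = _ from hderiv.deriv, conjDx]
  ring

lemma conjDt_conjDt (hq : ContDiff ℝ ∞ (Function.uncurry q))
    (hw : ContDiff ℝ ∞ (Function.uncurry w)) :
    conjDt q (conjDt q w) = fun x t => pdt (pdt w) x t - 2 * pdt q x t * pdt w x t
      + (pdt q x t ^ 2 - pdt (pdt q) x t) * w x t := by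
  ext x t
  have hderiv := (hasDerivAt_pdt (contDiff_pdt hw) x t).fun_sub
    ((hasDerivAt_pdt (contDiff_pdt hq) x t).fun_mul (hasDerivAt_pdt hw x t))
  rw [conjDt, show pdt (conjDt q w) x t = _ from hderiv.deriv, conjDt]
  ring

lemma conjDx_conjDx_conjDx (hq : ContDiff ℝ ∞ (Function.uncurry q))
    (hw : ContDiff ℝ ∞ (Function.uncurry w)) (x t : ℝ) :
    conjDx q (conjDx q (conjDx q w)) x t
      = pdx (pdx (pdx w)) x t - 3 * pdx q x t * pdx (pdx w) x t
        + 3 * (pdx q x t ^ 2 - pdx (pdx q) x t) * pdx w x t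
        + (3 * pdx q x t * pdx (pdx q) x t - pdx (pdx (pdx q)) x t - pdx q x t ^ 3) * w x t := by
  have hqx := contDiff_pdx hq
  have hwx := contDiff_pdx hw
  have hderiv := ((hasDerivAt_pdx (contDiff_pdx hwx) x t).fun_sub
    (((hasDerivAt_pdx hqx x t).const_mul 2).fun_mul (hasDerivAt_pdx hwx x t))).fun_add
    ((((hasDerivAt_pdx hqx x t).fun_pow 2).fun_sub (hasDerivAt_pdx (contDiff_pdx hqx) x t)).fun_mul
      (hasDerivAt_pdx hw x t))
  rw [conjDx_conjDx hq hw, conjDx, pdx, show deriv _ x = _ from hderiv.deriv]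
  ring

lemma conjDx_conjDt_conjDt (hq : ContDiff ℝ ∞ (Function.uncurry q))
    (hw : ContDiff ℝ ∞ (Function.uncurry w)) (x t : ℝ) :
    conjDx q (conjDt q (conjDt q w)) x t
      = pdx (pdt (pdt w)) x t - 2 * pdt q x t * pdx (pdt w) x t - pdx q x t * pdt (pdt w) x t
        + (pdt q x t ^ 2 - pdt (pdt q) x t) * pdx w x t
        + 2 * (pdx q x t * pdt q x t - pdx (pdt q) x t) * pdt w x t
        + (pdx q x t * pdt (pdt q) x t + 2 * pdt q x t * pdx (pdt q) x t
          - pdx q x t * pdt q x t ^ 2 - pdx (pdt (pdt q)) x t) * w x t := by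
  have hqt := contDiff_pdt hq
  have hwt := contDiff_pdt hw
  have hderiv := ((hasDerivAt_pdx (contDiff_pdt hwt) x t).fun_sub
    (((hasDerivAt_pdx hqt x t).const_mul 2).fun_mul (hasDerivAt_pdx hwt x t))).fun_add
    ((((hasDerivAt_pdx hqt x t).fun_pow 2).fun_sub (hasDerivAt_pdx (contDiff_pdt hqt) x t)).fun_mul
      (hasDerivAt_pdx hw x t))
  rw [conjDt_conjDt hq hw, conjDx, pdx, show deriv _ x = _ from hderiv.deriv]
  ring

lemma contDiff_carEta (Lt T m μ : ℝ) :
    ContDiff ℝ ∞ (Function.uncurry (carEta Lt T m μ)) := by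
  unfold carEta Function.uncurry
  fun_prop

lemma contDiff_carQ (Lt T m μ τ : ℝ) :
    ContDiff ℝ ∞ (Function.uncurry (carQ Lt T m μ τ)) :=
  contDiff_const.mul (contDiff_carEta Lt T m μ)

lemma contDiff_carTheta_mul (Lt T m μ τ : ℝ) (hv : ContDiff ℝ ∞ (Function.uncurry v)) :
    ContDiff ℝ ∞ (Function.uncurry fun x t => carTheta Lt T m μ τ x t * v x t) :=
  (contDiff_carQ Lt T m μ τ).exp.mul hv

lemma carTheta_mul_carP (ρ Lt T m μ τ : ℝ) (hv : ContDiff ℝ ∞ (Function.uncurry v))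
    (hw : w = fun x t => carTheta Lt T m μ τ x t * v x t) (x t : ℝ) :
    carTheta Lt T m μ τ x t * carP ρ v x t =
      carI1 ρ Lt T m μ τ w x t + carI2 ρ Lt T m μ τ w x t + carS ρ Lt T m μ τ w x t := by
  have hq := contDiff_carQ Lt T m μ τ
  have hwsmooth : ContDiff ℝ ∞ (Function.uncurry w) := hw ▸ contDiff_carTheta_mul Lt T m μ τ hv
  have hxxx : conjDx (carQ Lt T m μ τ) (conjDx (carQ Lt T m μ τ) (conjDx (carQ Lt T m μ τ) w)) x t
      = carTheta Lt T m μ τ x t * pdx (pdx (pdx v)) x t := by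
    simp only [hw, carTheta]
    rw [conjDx_exp_mul hq hv, conjDx_exp_mul hq (contDiff_pdx hv),
      conjDx_exp_mul hq (contDiff_pdx (contDiff_pdx hv))]
  have httx : conjDx (carQ Lt T m μ τ) (conjDt (carQ Lt T m μ τ) (conjDt (carQ Lt T m μ τ) w)) x t
      = carTheta Lt T m μ τ x t * pdx (pdt (pdt v)) x t := by
    simp only [hw, carTheta]
    rw [conjDt_exp_mul hq hv, conjDt_exp_mul hq (contDiff_pdt hv),
      conjDx_exp_mul hq (contDiff_pdt (contDiff_pdt hv))]
  rw [conjDx_conjDx_conjDx hq hwsmooth] at hxxx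
  rw [conjDx_conjDt_conjDt hq hwsmooth] at httx
  unfold carP carI1 carI2 carS
  linear_combination ρ * hxxx - httx

end Conjugation

noncomputable section RectIntegral

/-- The integral over the rectangle `[a, b] × [c, d]`, iterated with the space variable inside. -/
def rectIntegral (a b c d : ℝ) (f : ℝ → ℝ → ℝ) : ℝ := ∫ t in c..d, ∫ x in a..b, f x t

variable {a b c d : ℝ} {f g : ℝ → ℝ → ℝ}

lemma continuous_integral_section (hf : Continuous (Function.uncurry f)) :
    Continuous fun t => ∫ x in a..b, f x t :=
  have hswap : Continuous (Function.uncurry fun t x => f x t) := hf.comp continuous_swap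
  intervalIntegral.continuous_parametric_intervalIntegral_of_continuous' hswap a b

lemma rectIntegral_add (hf : Continuous (Function.uncurry f))
    (hg : Continuous (Function.uncurry g)) :
    rectIntegral a b c d (fun x t => f x t + g x t)
      = rectIntegral a b c d f + rectIntegral a b c d g := by
  have hsections (t : ℝ) :
      ∫ x in a..b, (f x t + g x t) = (∫ x in a..b, f x t) + ∫ x in a..b, g x t :=
    intervalIntegral.integral_add
      (Continuous.intervalIntegrable (by fun_prop) _ _)
      (Continuous.intervalIntegrable (by fun_prop) _ _)
  simp only [rectIntegral, hsections]
  exact intervalIntegral.integral_add ((continuous_integral_section hf).intervalIntegrable _ _)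
    ((continuous_integral_section hg).intervalIntegrable _ _)

lemma rectIntegral_const_mul (k : ℝ) :
    rectIntegral a b c d (fun x t => k * f x t) = k * rectIntegral a b c d f := by
  simp only [rectIntegral, intervalIntegral.integral_const_mul]

lemma rectIntegral_const_mul_add_add {h : ℝ → ℝ → ℝ} (hf : Continuous (Function.uncurry f))
    (hg : Continuous (Function.uncurry g)) (hh : Continuous (Function.uncurry h)) (C k l : ℝ) :
    rectIntegral a b c d (fun x t => C * (f x t + k * g x t + l * h x t)) =
      C * (rectIntegral a b c d f + k * rectIntegral a b c d g + l * rectIntegral a b c d h) := by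
  have hkg : Continuous (Function.uncurry fun x t => k * g x t) := continuous_const.mul hg
  have hlh : Continuous (Function.uncurry fun x t => l * h x t) := continuous_const.mul hh
  have hsum : Continuous (Function.uncurry fun x t => f x t + k * g x t) := hf.add hkg
  rw [rectIntegral_const_mul, rectIntegral_add hsum hlh, rectIntegral_add hf hkg,
    rectIntegral_const_mul, rectIntegral_const_mul]

lemma rectIntegral_mono (hab : a ≤ b) (hcd : c ≤ d) (hf : Continuous (Function.uncurry f))
    (hg : Continuous (Function.uncurry g))
    (hfg : ∀ x ∈ Icc a b, ∀ t ∈ Icc c d, f x t ≤ g x t) :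
    rectIntegral a b c d f ≤ rectIntegral a b c d g :=
  intervalIntegral.integral_mono_on hcd
    ((continuous_integral_section hf).intervalIntegrable _ _)
    ((continuous_integral_section hg).intervalIntegrable _ _) fun t ht =>
      intervalIntegral.integral_mono_on hab (Continuous.intervalIntegrable (by fun_prop) _ _)
        (Continuous.intervalIntegrable (by fun_prop) _ _) fun x hx => hfg x hx t ht

lemma rectIntegral_pdx_eq_zero (hf : ContDiff ℝ ∞ (Function.uncurry f))
    (ha : ∀ t, f a t = 0) (hb : ∀ t, f b t = 0) : rectIntegral a b c d (pdx f) = 0 := by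
  have hfx := (contDiff_pdx hf).continuous
  have hsections (t : ℝ) : ∫ x in a..b, pdx f x t = 0 := by
    rw [intervalIntegral.integral_eq_sub_of_hasDerivAt (fun x _ => hasDerivAt_pdx hf x t)
      (Continuous.intervalIntegrable (by fun_prop) _ _), ha, hb, sub_zero]
  simp only [rectIntegral, hsections, intervalIntegral.integral_zero]

lemma rectIntegral_pdt_eq_zero (hf : ContDiff ℝ ∞ (Function.uncurry f))
    (hc : ∀ x, f x c = 0) (hd : ∀ x, f x d = 0) : rectIntegral a b c d (pdt f) = 0 := by
  have hft := (contDiff_pdt hf).continuous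
  have hsections (x : ℝ) : ∫ t in c..d, pdt f x t = 0 := by
    rw [intervalIntegral.integral_eq_sub_of_hasDerivAt (fun t _ => hasDerivAt_pdt hf x t)
      (Continuous.intervalIntegrable (by fun_prop) _ _), hc, hd, sub_zero]
  have hintegrable :
      IntegrableOn (Function.uncurry fun t x => pdt f x t) (uIoc c d ×ˢ uIoc a b) :=
    ((hft.comp continuous_swap).continuousOn.integrableOn_compact
      (isCompact_uIcc.prod isCompact_uIcc)).mono_set
        (prod_mono uIoc_subset_uIcc uIoc_subset_uIcc)
  rw [rectIntegral, intervalIntegral_intervalIntegral_swap hintegrable]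
  simp only [hsections, intervalIntegral.integral_zero]

/-- `f ≤ g` on `[a, b] × [c, d]` up to the divergence `Φ_x + Ψ_t` of a smooth field `(Φ, Ψ)` whose
normal component vanishes on the boundary of the rectangle. -/
def LeUpToDiv (a b c d : ℝ) (f g : ℝ → ℝ → ℝ) : Prop :=
  ∃ Φ Ψ : ℝ → ℝ → ℝ, ContDiff ℝ ∞ (Function.uncurry Φ) ∧ ContDiff ℝ ∞ (Function.uncurry Ψ) ∧
    (∀ t, Φ a t = 0 ∧ Φ b t = 0) ∧ (∀ x, Ψ x c = 0 ∧ Ψ x d = 0) ∧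
    ∀ x ∈ Icc a b, ∀ t ∈ Icc c d, f x t ≤ g x t + (pdx Φ x t + pdt Ψ x t)

namespace LeUpToDiv

variable {f₁ f₂ g₁ g₂ : ℝ → ℝ → ℝ}

lemma mono (h : LeUpToDiv a b c d f₁ g₁)
    (hle : ∀ x ∈ Icc a b, ∀ t ∈ Icc c d, f₂ x t + g₁ x t ≤ f₁ x t + g₂ x t) :
    LeUpToDiv a b c d f₂ g₂ := by
  obtain ⟨Φ, Ψ, hΦ, hΨ, hΦab, hΨcd, h⟩ := h
  exact ⟨Φ, Ψ, hΦ, hΨ, hΦab, hΨcd, fun x hx t ht => by linarith [h x hx t ht, hle x hx t ht]⟩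

lemma add (h₁ : LeUpToDiv a b c d f₁ g₁) (h₂ : LeUpToDiv a b c d f₂ g₂) :
    LeUpToDiv a b c d (fun x t => f₁ x t + f₂ x t) fun x t => g₁ x t + g₂ x t := by
  obtain ⟨Φ₁, Ψ₁, hΦ₁, hΨ₁, hΦab₁, hΨcd₁, h₁⟩ := h₁
  obtain ⟨Φ₂, Ψ₂, hΦ₂, hΨ₂, hΦab₂, hΨcd₂, h₂⟩ := h₂
  refine ⟨fun x t => Φ₁ x t + Φ₂ x t, fun x t => Ψ₁ x t + Ψ₂ x t, hΦ₁.add hΦ₂, hΨ₁.add hΨ₂,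
    fun t => by simp [hΦab₁ t, hΦab₂ t], fun x => by simp [hΨcd₁ x, hΨcd₂ x],
    fun x hx t ht => ?_⟩
  have hpdx := ((hasDerivAt_pdx hΦ₁ x t).fun_add (hasDerivAt_pdx hΦ₂ x t)).deriv
  have hpdt := ((hasDerivAt_pdt hΨ₁ x t).fun_add (hasDerivAt_pdt hΨ₂ x t)).deriv
  rw [pdx, pdt, hpdx, hpdt]
  linarith [h₁ x hx t ht, h₂ x hx t ht]

lemma const_mul {k : ℝ} (hk : 0 ≤ k) (h : LeUpToDiv a b c d f g) :
    LeUpToDiv a b c d (fun x t => k * f x t) fun x t => k * g x t := by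
  obtain ⟨Φ, Ψ, hΦ, hΨ, hΦab, hΨcd, h⟩ := h
  refine ⟨fun x t => k * Φ x t, fun x t => k * Ψ x t, contDiff_const.mul hΦ, contDiff_const.mul hΨ,
    fun t => by simp [hΦab t], fun x => by simp [hΨcd x], fun x hx t ht => ?_⟩
  rw [pdx, pdt, ((hasDerivAt_pdx hΦ x t).const_mul k).deriv,
    ((hasDerivAt_pdt hΨ x t).const_mul k).deriv]
  linarith [mul_le_mul_of_nonneg_left (h x hx t ht) hk]

lemma rectIntegral_le (h : LeUpToDiv a b c d f g) (hab : a ≤ b) (hcd : c ≤ d)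
    (hf : Continuous (Function.uncurry f)) (hg : Continuous (Function.uncurry g)) :
    rectIntegral a b c d f ≤ rectIntegral a b c d g := by
  obtain ⟨Φ, Ψ, hΦ, hΨ, hΦab, hΨcd, hle⟩ := h
  have hΦx := (contDiff_pdx hΦ).continuous
  have hΨt := (contDiff_pdt hΨ).continuous
  have hdiv : Continuous (Function.uncurry fun x t => pdx Φ x t + pdt Ψ x t) := hΦx.add hΨt
  calc rectIntegral a b c d f
      ≤ rectIntegral a b c d (fun x t => g x t + (pdx Φ x t + pdt Ψ x t)) :=
        rectIntegral_mono hab hcd hf (hg.add hdiv) hle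
    _ = rectIntegral a b c d g := by
        rw [rectIntegral_add hg hdiv, rectIntegral_add hΦx hΨt,
          rectIntegral_pdx_eq_zero hΦ (fun t => (hΦab t).1) (fun t => (hΦab t).2),
          rectIntegral_pdt_eq_zero hΨ (fun x => (hΨcd x).1) (fun x => (hΨcd x).2),
          add_zero, add_zero]

end LeUpToDiv

end RectIntegral

section AbsBounds

variable {a b A B : ℝ}

lemma abs_mul_le_mul_of_abs_le (ha : |a| ≤ A) (hb : |b| ≤ B) : |a * b| ≤ A * B := by
  rw [abs_mul]
  exact mul_le_mul ha hb (abs_nonneg b) ((abs_nonneg a).trans ha)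

lemma abs_add_le_add_of_abs_le (ha : |a| ≤ A) (hb : |b| ≤ B) : |a + b| ≤ A + B :=
  (abs_add_le a b).trans (add_le_add ha hb)

lemma abs_mul_add_mul_le {K : ℝ} (ha : |a| ≤ K) (hb : |b| ≤ K) :
    |a * A + b * B| ≤ K * (|A| + |B|) := by
  rw [mul_add]
  exact abs_add_le_add_of_abs_le (abs_mul_le_mul_of_abs_le ha le_rfl)
    (abs_mul_le_mul_of_abs_le hb le_rfl)

lemma abs_inv_le_one (ha : 1 ≤ a) : |a⁻¹| ≤ 1 := by
  rw [abs_of_nonneg (by positivity)]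
  exact inv_le_one_of_one_le₀ ha

end AbsBounds

section ProductRule

variable {f g : ℝ → ℝ → ℝ} {K x t : ℝ}

lemma abs_pdx_mul_le (hf : ContDiff ℝ ∞ (Function.uncurry f))
    (hg : ContDiff ℝ ∞ (Function.uncurry g)) (hf1 : |f x t| ≤ 1) (hg1 : |g x t| ≤ 1)
    (hfx : |pdx f x t| ≤ K) (hgx : |pdx g x t| ≤ K) :
    |pdx (fun x t => f x t * g x t) x t| ≤ 2 * K := by
  rw [pdx, ((hasDerivAt_pdx hf x t).fun_mul (hasDerivAt_pdx hg x t)).deriv]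
  linarith [abs_add_le_add_of_abs_le (abs_mul_le_mul_of_abs_le hfx hg1)
    (abs_mul_le_mul_of_abs_le hf1 hgx)]

lemma abs_pdt_mul_le (hf : ContDiff ℝ ∞ (Function.uncurry f))
    (hg : ContDiff ℝ ∞ (Function.uncurry g)) (hf1 : |f x t| ≤ 1) (hg1 : |g x t| ≤ 1)
    (hft : |pdt f x t| ≤ K) (hgt : |pdt g x t| ≤ K) :
    |pdt (fun x t => f x t * g x t) x t| ≤ 2 * K := by
  rw [pdt, ((hasDerivAt_pdt hf x t).fun_mul (hasDerivAt_pdt hg x t)).deriv]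
  linarith [abs_add_le_add_of_abs_le (abs_mul_le_mul_of_abs_le hft hg1)
    (abs_mul_le_mul_of_abs_le hf1 hgt)]

end ProductRule

noncomputable section BoundaryLayer

/-- A weight equal to `1` at the end points of `[A, B]` and exponentially small, at the rate `s`,
in its interior. -/
def boundaryLayer (A B s y : ℝ) : ℝ := Real.exp (-((y - A) * (B - y) * s))

/-- A flux vanishing at `A` and `B` whose derivative is, to leading order,
`(B - A)² Z e (μ σ² u)²` with `e` the boundary layer of rate `σ`. -/
def boundaryFlux (A B μ : ℝ) (σ Z u : ℝ → ℝ) (y : ℝ) : ℝ :=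
  μ ^ 2 * σ y ^ 3 * Z y * (A + B - 2 * y) * (1 - boundaryLayer A B (σ y) y) * u y ^ 2

variable {A B M μ p z s y u' : ℝ} {σ Z u : ℝ → ℝ}

lemma boundaryFlux_left : boundaryFlux A B μ σ Z u A = 0 := by
  simp [boundaryFlux, boundaryLayer]

lemma boundaryFlux_right : boundaryFlux A B μ σ Z u B = 0 := by
  simp [boundaryFlux, boundaryLayer]

lemma boundaryLayer_pos : 0 < boundaryLayer A B s y := Real.exp_pos _

lemma boundaryLayer_le_one (hs : 0 ≤ s) (hy : y ∈ Icc A B) : boundaryLayer A B s y ≤ 1 :=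
  Real.exp_le_one_iff.2 <| neg_nonpos.2 <|
    mul_nonneg (mul_nonneg (sub_nonneg.2 hy.1) (sub_nonneg.2 hy.2)) hs

lemma abs_one_sub_boundaryLayer_le_one (hs : 0 ≤ s) (hy : y ∈ Icc A B) :
    |1 - boundaryLayer A B s y| ≤ 1 := by
  rw [abs_le]
  constructor <;> linarith [boundaryLayer_le_one hs hy, @boundaryLayer_pos A B s y]

lemma abs_rate_mul_boundaryLayer_le_one (hs : 0 ≤ s) (hy : y ∈ Icc A B) :
    |(y - A) * (B - y) * s * boundaryLayer A B s y| ≤ 1 := by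
  have hrate : 0 ≤ (y - A) * (B - y) * s :=
    mul_nonneg (mul_nonneg (sub_nonneg.2 hy.1) (sub_nonneg.2 hy.2)) hs
  rw [abs_of_nonneg (mul_nonneg hrate boundaryLayer_pos.le)]
  exact (Real.mul_exp_neg_le_exp_neg_one _).trans (Real.exp_le_one_iff.2 (by norm_num))

lemma hasDerivAt_boundaryLayer (hσ : HasDerivAt σ (μ * p * σ y) y) :
    HasDerivAt (fun y => boundaryLayer A B (σ y) y)
      (-((A + B - 2 * y) * σ y * boundaryLayer A B (σ y) y)
        - μ * p * ((y - A) * (B - y) * σ y * boundaryLayer A B (σ y) y)) y := by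
  have hrate := ((((hasDerivAt_id' y).sub_const A).fun_mul ((hasDerivAt_id' y).const_sub B)).fun_mul
    hσ).fun_neg
  refine hrate.exp.congr_deriv ?_
  simp only [boundaryLayer]
  ring

lemma hasDerivAt_boundaryLayer_rate (hσ : HasDerivAt σ (μ * p * σ s) s) :
    HasDerivAt (fun s => boundaryLayer A B (σ s) y)
      (-(μ * p * ((y - A) * (B - y) * σ s * boundaryLayer A B (σ s) y))) s := by
  refine (hσ.const_mul ((y - A) * (B - y))).fun_neg.exp.congr_deriv ?_
  simp only [boundaryLayer]
  ring

lemma abs_deriv_boundaryLayer_le (hs : 0 ≤ s) (hμ : 0 ≤ μ) (hy : y ∈ Icc A B)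
    (hAB : B - A ≤ M) (hp : |p| ≤ M) :
    |-((A + B - 2 * y) * s * boundaryLayer A B s y)
      - μ * p * ((y - A) * (B - y) * s * boundaryLayer A B s y)| ≤ M * (μ + s) := by
  have hD : |A + B - 2 * y| ≤ M := abs_le.2 ⟨by linarith [hy.2], by linarith [hy.1]⟩
  have hlayer : |boundaryLayer A B s y| ≤ 1 := by
    rw [abs_of_pos boundaryLayer_pos]
    exact boundaryLayer_le_one hs hy
  have hwidth := abs_mul_le_mul_of_abs_le (abs_mul_le_mul_of_abs_le hD (abs_of_nonneg hs).le) hlayer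
  have hrate := abs_mul_le_mul_of_abs_le (abs_mul_le_mul_of_abs_le (abs_of_nonneg hμ).le hp)
    (abs_rate_mul_boundaryLayer_le_one hs hy)
  refine (abs_sub _ _).trans ?_
  rw [abs_neg]
  linarith

lemma abs_deriv_boundaryLayer_rate_le (hs : 0 ≤ s) (hμ : 0 ≤ μ) (hy : y ∈ Icc A B)
    (hp : |p| ≤ M) :
    |-(μ * p * ((y - A) * (B - y) * s * boundaryLayer A B s y))| ≤ M * (μ + s) := by
  have hrate := abs_mul_le_mul_of_abs_le (abs_mul_le_mul_of_abs_le (abs_of_nonneg hμ).le hp)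
    (abs_rate_mul_boundaryLayer_le_one hs hy)
  rw [abs_neg]
  linarith [mul_nonneg ((abs_nonneg p).trans hp) hs]

lemma hasDerivAt_boundaryFlux (hμ : μ ≠ 0) (hσ : HasDerivAt σ (μ * p * σ y) y)
    (hZ : HasDerivAt Z (μ * z) y) (hu : HasDerivAt u u' y) :
    HasDerivAt (boundaryFlux A B μ σ Z u)
      ((B - A) ^ 2 * (Z y * boundaryLayer A B (σ y) y) * (μ * σ y ^ 2 * u y) ^ 2
        + μ * σ y ^ 2 * u y * (
          2 * (Z y * (1 - boundaryLayer A B (σ y) y) * (A + B - 2 * y)) * (μ * σ y * u')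
          + ((3 * p * Z y + z) * ((1 - boundaryLayer A B (σ y) y) * (A + B - 2 * y))
            + p * (Z y * ((y - A) * (B - y) * σ y * boundaryLayer A B (σ y) y) * (A + B - 2 * y))
            - μ⁻¹ * (2 * (Z y * (1 - boundaryLayer A B (σ y) y))
              + 4 * (Z y * ((y - A) * (B - y) * σ y * boundaryLayer A B (σ y) y))))
            * (μ ^ 2 * σ y * u y))) y := by
  have hlayer : HasDerivAt (fun y => boundaryLayer A B (σ y) y) _ y := hasDerivAt_boundaryLayer hσ
  have hflux := ((((((hσ.fun_pow 3).const_mul (μ ^ 2)).fun_mul hZ).fun_mul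
    (((hasDerivAt_id' y).const_mul 2).const_sub (A + B))).fun_mul
    (hlayer.const_sub 1)).fun_mul (hu.fun_pow 2))
  refine hflux.congr_deriv ?_
  field_simp
  ring

lemma abs_boundaryFlux_remainder_le {D X ζ n ν : ℝ} (hM : 1 ≤ M) (hp : |p| ≤ M) (hz : |z| ≤ M)
    (hD : |D| ≤ M) (hX : |X| ≤ 1) (hζ : |ζ| ≤ 1) (hn : |n| ≤ 1) (hν : |ν| ≤ 1) :
    |(3 * p * ζ + z) * (X * D) + p * (ζ * n * D) - ν * (2 * (ζ * X) + 4 * (ζ * n))|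
      ≤ 11 * M ^ 2 := by
  have hζX : |ζ * X| ≤ 1 * 1 := abs_mul_le_mul_of_abs_le hζ hX
  have hζn : |ζ * n| ≤ 1 * 1 := abs_mul_le_mul_of_abs_le hζ hn
  have hpz : |3 * p * ζ + z| ≤ 3 * M * 1 + M :=
    abs_add_le_add_of_abs_le (abs_mul_le_mul_of_abs_le
      (abs_mul_le_mul_of_abs_le (abs_of_pos three_pos).le hp) hζ) hz
  have hpzXD := abs_mul_le_mul_of_abs_le hpz (abs_mul_le_mul_of_abs_le hX hD)
  have hpζnD := abs_mul_le_mul_of_abs_le hp (abs_mul_le_mul_of_abs_le hζn hD)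
  have hlower : |2 * (ζ * X) + 4 * (ζ * n)| ≤ 2 * (1 * 1) + 4 * (1 * 1) :=
    abs_add_le_add_of_abs_le (abs_mul_le_mul_of_abs_le abs_two.le hζX)
      (abs_mul_le_mul_of_abs_le (abs_of_pos four_pos).le hζn)
  have hνlower := abs_mul_le_mul_of_abs_le hν hlower
  refine (abs_sub _ _).trans ?_
  nlinarith [abs_add_le ((3 * p * ζ + z) * (X * D)) (p * (ζ * n * D))]

lemma boundaryLayer_mul_sq_le (hM : 1 ≤ M) (hμ : 1 ≤ μ) (hy : y ∈ Icc A B) (hAB : B - A ≤ M)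
    (hp : |p| ≤ M) (hz : |z| ≤ M) (hσ0 : 0 ≤ σ y) (hZ1 : |Z y| ≤ 1)
    (hσ : HasDerivAt σ (μ * p * σ y) y) (hZ : HasDerivAt Z (μ * z) y) (hu : HasDerivAt u u' y) :
    (B - A) ^ 2 * (Z y * boundaryLayer A B (σ y) y) * (μ * σ y ^ 2 * u y) ^ 2 ≤
      deriv (boundaryFlux A B μ σ Z u) y +
        11 * M ^ 2 * (|μ * σ y ^ 2 * u y| * (|μ * σ y * u'| + |μ ^ 2 * σ y * u y|)) := by
  rw [(hasDerivAt_boundaryFlux (by positivity) hσ hZ hu).deriv]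
  have hX := abs_one_sub_boundaryLayer_le_one hσ0 hy
  have hn := abs_rate_mul_boundaryLayer_le_one hσ0 hy
  have hD : |A + B - 2 * y| ≤ M := abs_le.2 ⟨by linarith [hy.2], by linarith [hy.1]⟩
  have hν : |μ⁻¹| ≤ 1 := abs_inv_le_one hμ
  generalize (y - A) * (B - y) * σ y * boundaryLayer A B (σ y) y = n at *
  generalize 1 - boundaryLayer A B (σ y) y = X at *
  generalize A + B - 2 * y = D at *
  generalize μ * σ y ^ 2 * u y = a
  generalize μ * σ y * u' = b
  generalize μ ^ 2 * σ y * u y = g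
  have hb : |2 * (Z y * X * D)| ≤ 11 * M ^ 2 := by
    have hZXD := abs_mul_le_mul_of_abs_le (abs_mul_le_mul_of_abs_le hZ1 hX) hD
    rw [abs_mul, abs_two]
    nlinarith
  have hremainder := abs_mul_le_mul_of_abs_le (le_refl |a|) (abs_mul_add_mul_le (A := b) (B := g)
    hb (abs_boundaryFlux_remainder_le hM hp hz hD hX hZ1 hn hν))
  linarith [neg_le_of_abs_le hremainder]

end BoundaryLayer

noncomputable section Weight

/-- `σ = μq`, the size of the gradient of `q`: with `r` the exponent of the weight, `∇q = σ∇r`. -/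
def carSigma (Lt T m μ τ x t : ℝ) : ℝ := μ * carQ Lt T m μ τ x t

/-- The space derivative `r_x` of the exponent `r = (x − L̃)² − m(t − T/2)²`. -/
def carRx (Lt x : ℝ) : ℝ := 2 * (x - Lt)

/-- The time derivative `r_t` of the exponent `r = (x − L̃)² − m(t − T/2)²`. -/
def carRt (T m t : ℝ) : ℝ := -2 * m * (t - T / 2)

/-- `−E` is the zero-order coefficient of `I₂` divided by `σ³`; `E > 0` expresses that the weight is
noncharacteristic for `P`. -/
def carE (ρ Lt T m x t : ℝ) : ℝ := carRx Lt x * carRt T m t ^ 2 - ρ * carRx Lt x ^ 3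

/-- The top-order quantity `μσ²w = μ³q²w`, which must be absorbed by `I₂`. -/
def carTop (Lt T m μ τ : ℝ) (w : ℝ → ℝ → ℝ) (x t : ℝ) : ℝ :=
  μ * carSigma Lt T m μ τ x t ^ 2 * w x t

/-- The size of the lower-order quantities `μσw_x`, `μσw_t` and `μ²σw`, whose squares are integrands
of the right-hand side of the estimate. -/
def carLow (Lt T m μ τ : ℝ) (w : ℝ → ℝ → ℝ) (x t : ℝ) : ℝ :=
  |μ * carSigma Lt T m μ τ x t * pdx w x t| + |μ * carSigma Lt T m μ τ x t * pdt w x t|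
    + |μ ^ 2 * carSigma Lt T m μ τ x t * w x t|

variable {ρ Lt T m μ τ : ℝ} {w : ℝ → ℝ → ℝ}

local notation "σ" => carSigma Lt T m μ τ

lemma carSigma_pos (hμ : 0 < μ) (hτ : 0 < τ) (x t : ℝ) : 0 < σ x t :=
  mul_pos hμ (mul_pos hτ (Real.exp_pos _))

lemma contDiff_carSigma : ContDiff ℝ ∞ (Function.uncurry (σ)) :=
  contDiff_const.mul (contDiff_carQ Lt T m μ τ)

lemma hasDerivAt_carRx (x : ℝ) : HasDerivAt (carRx Lt) 2 x :=
  (((hasDerivAt_id' x).sub_const Lt).const_mul 2).congr_deriv (mul_one 2)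

lemma hasDerivAt_carRt (t : ℝ) : HasDerivAt (carRt T m) (-2 * m) t :=
  (((hasDerivAt_id' t).sub_const (T / 2)).const_mul (-2 * m)).congr_deriv (mul_one _)

lemma pdx_carQ : pdx (carQ Lt T m μ τ) = fun x t => carRx Lt x * σ x t := by
  ext x t
  have hr := ((((hasDerivAt_id' x).sub_const Lt).fun_pow 2).sub_const (m * (t - T / 2) ^ 2))
  refine (((hr.const_mul μ).exp).const_mul τ).deriv.trans ?_
  simp only [carSigma, carQ, carEta, carRx]
  ring

lemma pdt_carQ : pdt (carQ Lt T m μ τ) = fun x t => carRt T m t * σ x t := by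
  ext x t
  have hr := ((((hasDerivAt_id' t).sub_const (T / 2)).fun_pow 2).const_mul m).const_sub
    ((x - Lt) ^ 2)
  refine (((hr.const_mul μ).exp).const_mul τ).deriv.trans ?_
  simp only [carSigma, carQ, carEta, carRt]
  ring

lemma hasDerivAt_carSigma_fst (x t : ℝ) :
    HasDerivAt (fun y => σ y t) (μ * carRx Lt x * σ x t) x := by
  refine ((hasDerivAt_pdx (contDiff_carQ Lt T m μ τ) x t).const_mul μ).congr_deriv ?_
  rw [pdx_carQ, mul_assoc]

lemma hasDerivAt_carSigma_snd (x t : ℝ) :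
    HasDerivAt (fun s => σ x s) (μ * carRt T m t * σ x t) t := by
  refine ((hasDerivAt_pdt (contDiff_carQ Lt T m μ τ) x t).const_mul μ).congr_deriv ?_
  rw [pdt_carQ, mul_assoc]

lemma pdx_pdx_carQ : pdx (pdx (carQ Lt T m μ τ)) =
    fun x t => (μ * carRx Lt x ^ 2 + 2) * σ x t := by
  ext x t
  rw [pdx_carQ, pdx, ((hasDerivAt_carRx x).fun_mul (hasDerivAt_carSigma_fst x t)).deriv]
  ring

lemma pdt_pdt_carQ : pdt (pdt (carQ Lt T m μ τ)) =
    fun x t => (μ * carRt T m t ^ 2 - 2 * m) * σ x t := by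
  ext x t
  rw [pdt_carQ, pdt, ((hasDerivAt_carRt t).fun_mul (hasDerivAt_carSigma_snd x t)).deriv]
  ring

lemma pdx_pdt_carQ (x t : ℝ) : pdx (pdt (carQ Lt T m μ τ)) x t =
    μ * carRx Lt x * carRt T m t * σ x t := by
  rw [pdt_carQ, pdx, ((hasDerivAt_carSigma_fst x t).const_mul (carRt T m t)).deriv]
  ring

lemma pdx_pdx_pdx_carQ (x t : ℝ) : pdx (pdx (pdx (carQ Lt T m μ τ))) x t =
    (μ ^ 2 * carRx Lt x ^ 3 + 6 * μ * carRx Lt x) * σ x t := by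
  rw [pdx_pdx_carQ, pdx, (((((hasDerivAt_carRx x).fun_pow 2).const_mul μ).add_const 2).fun_mul
    (hasDerivAt_carSigma_fst x t)).deriv]
  ring

lemma pdx_pdt_pdt_carQ (x t : ℝ) : pdx (pdt (pdt (carQ Lt T m μ τ))) x t =
    (μ * carRt T m t ^ 2 - 2 * m) * μ * carRx Lt x * σ x t := by
  rw [pdt_pdt_carQ, pdx, ((hasDerivAt_carSigma_fst x t).const_mul _).deriv]
  ring

lemma carLow_nonneg (x t : ℝ) : 0 ≤ carLow Lt T m μ τ w x t := by
  unfold carLow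
  positivity

lemma carI2_eq (x t : ℝ) : carI2 ρ Lt T m μ τ w x t =
    σ x t * (3 * ρ * carRx Lt x * pdx (pdx w) x t
      - 2 * carRt T m t * pdx (pdt w) x t - carRx Lt x * pdt (pdt w) x t)
    - carE ρ Lt T m x t * σ x t ^ 3 * w x t := by
  simp only [carI2, pdx_carQ, pdt_carQ, carE]
  ring

lemma carS_eq (hμ : μ ≠ 0) (x t : ℝ) : carS ρ Lt T m μ τ w x t =
    (3 * ρ * (carRx Lt x ^ 2 + 2 * μ⁻¹) - (carRt T m t ^ 2 - 2 * m * μ⁻¹))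
        * (μ * σ x t * pdx w x t)
      + -2 * carRx Lt x * carRt T m t * (μ * σ x t * pdt w x t)
      + carRx Lt x * (ρ * (carRx Lt x ^ 2 + 6 * μ⁻¹) - (carRt T m t ^ 2 - 2 * m * μ⁻¹))
        * (μ ^ 2 * σ x t * w x t)
      + carRx Lt x * (3 * carRt T m t ^ 2 - 3 * ρ * (carRx Lt x ^ 2 + 2 * μ⁻¹) - 2 * m * μ⁻¹)
        * carTop Lt T m μ τ w x t := by
  rw [carS, carTop, pdx_pdx_pdx_carQ, pdx_pdt_pdt_carQ, pdx_pdx_carQ, pdt_pdt_carQ, pdx_pdt_carQ,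
    pdx_carQ, pdt_carQ]
  field_simp
  ring

lemma abs_carS_coeff_le {M p s ν : ℝ} (hM : 1 ≤ M) (hρ : |ρ| ≤ M) (hm : |m| ≤ M) (hp : |p| ≤ M)
    (hs : |s| ≤ M) (hν : |ν| ≤ 1) :
    |3 * ρ * (p ^ 2 + 2 * ν) - (s ^ 2 - 2 * m * ν)| ≤ 14 * M ^ 4 ∧
    |-2 * p * s| ≤ 14 * M ^ 4 ∧
    |p * (ρ * (p ^ 2 + 6 * ν) - (s ^ 2 - 2 * m * ν))| ≤ 14 * M ^ 4 ∧
    |p * (3 * s ^ 2 - 3 * ρ * (p ^ 2 + 2 * ν) - 2 * m * ν)| ≤ 14 * M ^ 4 := by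
  have hM23 : M ^ 2 ≤ M ^ 3 := pow_le_pow_right₀ hM (by norm_num)
  have hM34 : M ^ 3 ≤ M ^ 4 := pow_le_pow_right₀ hM (by norm_num)
  have hM12 : M ≤ M ^ 2 := le_self_pow₀ hM two_ne_zero
  have hp2 : |p ^ 2| ≤ M ^ 2 := (abs_pow p 2).trans_le (by gcongr)
  have hs2 : |s ^ 2| ≤ M ^ 2 := (abs_pow s 2).trans_le (by gcongr)
  have hmν : |2 * m * ν| ≤ 2 * M * 1 :=
    abs_mul_le_mul_of_abs_le (abs_mul_le_mul_of_abs_le abs_two.le hm) hν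
  have hρp {k : ℝ} (hk : 0 ≤ k) : |ρ * (p ^ 2 + k * ν)| ≤ M * (M ^ 2 + k * 1) :=
    abs_mul_le_mul_of_abs_le hρ (abs_add_le_add_of_abs_le hp2
      (abs_mul_le_mul_of_abs_le (abs_of_nonneg hk).le hν))
  have hρp2 := abs_le.1 (hρp zero_le_two)
  have hρp6 := abs_le.1 (hρp (k := 6) (by norm_num))
  have hg : |ρ * (p ^ 2 + 6 * ν) - (s ^ 2 - 2 * m * ν)| ≤ 14 * M ^ 3 := by
    rw [abs_le] at hs2 hmν ⊢
    constructor <;> linarith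
  have ha : |3 * s ^ 2 - 3 * ρ * (p ^ 2 + 2 * ν) - 2 * m * ν| ≤ 14 * M ^ 3 := by
    rw [abs_le] at hs2 hmν ⊢
    constructor <;> linarith
  refine ⟨?_, ?_, ?_, ?_⟩
  · rw [abs_le] at hs2 hmν ⊢
    constructor <;> linarith
  · have hps := abs_mul_le_mul_of_abs_le hp hs
    rw [mul_assoc, abs_mul, abs_neg, abs_two]
    linarith
  · linarith [abs_mul_le_mul_of_abs_le hp hg]
  · linarith [abs_mul_le_mul_of_abs_le hp ha]

lemma abs_carS_le {M x t : ℝ} (hM : 1 ≤ M) (hμ : 1 ≤ μ) (hρ : |ρ| ≤ M) (hm : |m| ≤ M)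
    (hrx : |carRx Lt x| ≤ M) (hrt : |carRt T m t| ≤ M) :
    |carS ρ Lt T m μ τ w x t|
      ≤ 14 * M ^ 4 * (|carTop Lt T m μ τ w x t| + carLow Lt T m μ τ w x t) := by
  have hν : |μ⁻¹| ≤ 1 := abs_inv_le_one hμ
  obtain ⟨hb, hc, hg, ha⟩ := abs_carS_coeff_le hM hρ hm hrx hrt hν
  rw [carS_eq (by positivity), carLow, add_assoc]
  refine (abs_add_le_add_of_abs_le (abs_mul_add_mul_le hb hc)
    (abs_mul_add_mul_le hg ha)).trans_eq ?_
  ring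

end Weight

noncomputable section EllipticEstimate

/-- The space component of the flux in the identity obtained by multiplying `I₂(w)` by
`μ²σχw`, for a cutoff `χ`. -/
def ellipticFluxX (ρ Lt T m μ τ : ℝ) (χ w : ℝ → ℝ → ℝ) (x t : ℝ) : ℝ :=
  μ ^ 2 * carSigma Lt T m μ τ x t ^ 2 * χ x t * w x t *
    (3 * ρ * carRx Lt x * pdx w x t - 2 * carRt T m t * pdt w x t)

/-- The time component of the flux in the identity obtained by multiplying `I₂(w)` by
`μ²σχw`, for a cutoff `χ`. -/
def ellipticFluxT (Lt T m μ τ : ℝ) (χ w : ℝ → ℝ → ℝ) (x t : ℝ) : ℝ :=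
  μ ^ 2 * carSigma Lt T m μ τ x t ^ 2 * χ x t * w x t * (-carRx Lt x * pdt w x t)

/-- The products of lower-order quantities that remain in the estimate of the square of the
top-order quantity. -/
def carRem (ρ Lt T m μ τ : ℝ) (w : ℝ → ℝ → ℝ) (x t : ℝ) : ℝ :=
  carLow Lt T m μ τ w x t *
    (|carTop Lt T m μ τ w x t| + carLow Lt T m μ τ w x t + |carI2 ρ Lt T m μ τ w x t|)

variable {ρ Lt T m μ τ : ℝ} {χ w : ℝ → ℝ → ℝ}

local notation "σ" => carSigma Lt T m μ τ

lemma contDiff_ellipticFluxX (hχ : ContDiff ℝ ∞ (Function.uncurry χ))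
    (hw : ContDiff ℝ ∞ (Function.uncurry w)) :
    ContDiff ℝ ∞ (Function.uncurry (ellipticFluxX ρ Lt T m μ τ χ w)) := by
  have hσ : ContDiff ℝ ∞ (Function.uncurry σ) := contDiff_carSigma
  have hwx := contDiff_pdx hw
  have hwt := contDiff_pdt hw
  unfold Function.uncurry ellipticFluxX carRx carRt
  fun_prop

lemma contDiff_ellipticFluxT (hχ : ContDiff ℝ ∞ (Function.uncurry χ))
    (hw : ContDiff ℝ ∞ (Function.uncurry w)) :
    ContDiff ℝ ∞ (Function.uncurry (ellipticFluxT Lt T m μ τ χ w)) := by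
  have hσ : ContDiff ℝ ∞ (Function.uncurry σ) := contDiff_carSigma
  have hwt := contDiff_pdt hw
  unfold Function.uncurry ellipticFluxT carRx
  fun_prop

lemma pdx_ellipticFluxX (hχ : ContDiff ℝ ∞ (Function.uncurry χ))
    (hw : ContDiff ℝ ∞ (Function.uncurry w)) (x t : ℝ) :
    pdx (ellipticFluxX ρ Lt T m μ τ χ w) x t = μ ^ 2 * σ x t ^ 2 * (
      ((2 * μ * carRx Lt x * χ x t + pdx χ x t) * w x t + χ x t * pdx w x t) *
          (3 * ρ * carRx Lt x * pdx w x t - 2 * carRt T m t * pdt w x t)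
      + χ x t * w x t * (6 * ρ * pdx w x t + 3 * ρ * carRx Lt x * pdx (pdx w) x t
          - 2 * carRt T m t * pdx (pdt w) x t)) := by
  have hσ : HasDerivAt (fun y => σ y t) _ x := hasDerivAt_carSigma_fst x t
  have hrx : HasDerivAt (carRx Lt) 2 x := hasDerivAt_carRx x
  have hflux := (((((hσ.fun_pow 2).const_mul (μ ^ 2)).fun_mul
    (hasDerivAt_pdx hχ x t)).fun_mul (hasDerivAt_pdx hw x t)).fun_mul
    (((hrx.const_mul (3 * ρ)).fun_mul
      (hasDerivAt_pdx (contDiff_pdx hw) x t)).fun_sub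
      ((hasDerivAt_pdx (contDiff_pdt hw) x t).const_mul (2 * carRt T m t))))
  refine hflux.deriv.trans ?_
  ring

lemma pdt_ellipticFluxT (hχ : ContDiff ℝ ∞ (Function.uncurry χ))
    (hw : ContDiff ℝ ∞ (Function.uncurry w)) (x t : ℝ) :
    pdt (ellipticFluxT Lt T m μ τ χ w) x t = -(μ ^ 2 * σ x t ^ 2 * carRx Lt x * (
      ((2 * μ * carRt T m t * χ x t + pdt χ x t) * w x t + χ x t * pdt w x t) * pdt w x t
      + χ x t * w x t * pdt (pdt w) x t)) := by
  have hσ : HasDerivAt (fun s => σ x s) _ t := hasDerivAt_carSigma_snd x t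
  have hflux := (((((hσ.fun_pow 2).const_mul (μ ^ 2)).fun_mul
    (hasDerivAt_pdt hχ x t)).fun_mul (hasDerivAt_pdt hw x t)).fun_mul
    ((hasDerivAt_pdt (contDiff_pdt hw) x t).const_mul (-carRx Lt x)))
  refine hflux.deriv.trans ?_
  ring

lemma carE_mul_carTop_sq_eq (hχ : ContDiff ℝ ∞ (Function.uncurry χ))
    (hw : ContDiff ℝ ∞ (Function.uncurry w)) (x t : ℝ) :
    carE ρ Lt T m x t * χ x t * carTop Lt T m μ τ w x t ^ 2 =
      pdx (ellipticFluxX ρ Lt T m μ τ χ w) x t + pdt (ellipticFluxT Lt T m μ τ χ w) x t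
      - ((2 * carRx Lt x * χ x t * (μ ^ 2 * σ x t * w x t) + μ * σ x t * w x t * pdx χ x t
            + χ x t * (μ * σ x t * pdx w x t)) *
          (3 * ρ * carRx Lt x * (μ * σ x t * pdx w x t)
            - 2 * carRt T m t * (μ * σ x t * pdt w x t))
        - (2 * carRt T m t * χ x t * (μ ^ 2 * σ x t * w x t) + μ * σ x t * w x t * pdt χ x t
            + χ x t * (μ * σ x t * pdt w x t)) * (carRx Lt x * (μ * σ x t * pdt w x t))
        + 6 * ρ * χ x t * (μ * σ x t * w x t) * (μ * σ x t * pdx w x t)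
        + χ x t * (μ ^ 2 * σ x t * w x t) * carI2 ρ Lt T m μ τ w x t) := by
  rw [pdx_ellipticFluxX hχ hw, pdt_ellipticFluxT hχ hw, carI2_eq, carTop]
  ring

lemma abs_elliptic_factor_le {M p ζ ξ a b g : ℝ} (hM : 1 ≤ M) (hp : |p| ≤ M) (hζ : |ζ| ≤ 1)
    (hξ : |ξ| ≤ 2 * M * (|a| + |g|)) :
    |2 * p * ζ * g + ξ + ζ * b| ≤ 4 * M * (|a| + |b| + |g|) := by
  have hpζg : |2 * p * ζ * g| ≤ 2 * M * 1 * |g| :=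
    abs_mul_le_mul_of_abs_le (abs_mul_le_mul_of_abs_le
      (abs_mul_le_mul_of_abs_le abs_two.le hp) hζ) le_rfl
  have hζb : |ζ * b| ≤ 1 * |b| := abs_mul_le_mul_of_abs_le hζ le_rfl
  refine (abs_add_le_add_of_abs_le (abs_add_le_add_of_abs_le hpζg hξ) hζb).trans ?_
  nlinarith [abs_nonneg a, abs_nonneg b, abs_nonneg g]

lemma abs_elliptic_flux_le {M p s b c : ℝ} (hM : 1 ≤ M) (hρ : |ρ| ≤ M) (hp : |p| ≤ M)
    (hs : |s| ≤ M) : |3 * ρ * p * b - 2 * s * c| ≤ 3 * M ^ 2 * (|b| + |c|) := by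
  have hflux : |3 * ρ * p * b - 2 * s * c| ≤ 3 * M * M * |b| + 2 * M * |c| :=
    (abs_sub _ _).trans <| add_le_add
      (abs_mul_le_mul_of_abs_le (abs_mul_le_mul_of_abs_le
        (abs_mul_le_mul_of_abs_le (abs_of_pos three_pos).le hρ) hp) le_rfl)
      (abs_mul_le_mul_of_abs_le (abs_mul_le_mul_of_abs_le abs_two.le hs) le_rfl)
  have hMc : 2 * M * |c| ≤ 3 * M ^ 2 * |c| := by
    gcongr
    · norm_num
    · exact le_self_pow₀ hM two_ne_zero
  linarith

lemma abs_elliptic_remainder_le {M p s ζ h ξ ξ' a b c g I : ℝ} (hM : 1 ≤ M) (hρ : |ρ| ≤ M)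
    (hp : |p| ≤ M) (hs : |s| ≤ M) (hζ : |ζ| ≤ 1) (hh : |h| ≤ |g|)
    (hξ : |ξ| ≤ 2 * M * (|a| + |g|)) (hξ' : |ξ'| ≤ 2 * M * (|a| + |g|)) :
    |(2 * p * ζ * g + ξ + ζ * b) * (3 * ρ * p * b - 2 * s * c)
      - (2 * s * ζ * g + ξ' + ζ * c) * (p * c) + 6 * ρ * ζ * h * b + ζ * g * I|
      ≤ 23 * M ^ 3 * ((|b| + |c| + |g|) * (|a| + (|b| + |c| + |g|) + |I|)) := by
  obtain ⟨N, hN⟩ : ∃ N, N = |b| + |c| + |g| := ⟨_, rfl⟩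
  rw [← hN]
  have hb : |b| ≤ N := by linarith [abs_nonneg c, abs_nonneg g]
  have hc : |c| ≤ N := by linarith [abs_nonneg b, abs_nonneg g]
  have hg : |g| ≤ N := by linarith [abs_nonneg b, abs_nonneg c]
  have hN0 : 0 ≤ N := (abs_nonneg b).trans hb
  have hX : |2 * p * ζ * g + ξ + ζ * b| ≤ 4 * M * (|a| + N) :=
    (abs_elliptic_factor_le hM hp hζ hξ).trans (by nlinarith [abs_nonneg c])
  have hT : |2 * s * ζ * g + ξ' + ζ * c| ≤ 4 * M * (|a| + N) :=
    (abs_elliptic_factor_le hM hs hζ hξ').trans (by nlinarith [abs_nonneg b])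
  have hXflux := abs_mul_le_mul_of_abs_le hX
    ((abs_elliptic_flux_le (b := b) (c := c) hM hρ hp hs).trans
      (mul_le_mul_of_nonneg_left (by linarith [abs_nonneg g] : |b| + |c| ≤ N) (by positivity)))
  have hTflux := abs_mul_le_mul_of_abs_le hT (abs_mul_le_mul_of_abs_le hp hc)
  have hhb : |6 * ρ * ζ * h * b| ≤ 6 * M * 1 * N * N :=
    abs_mul_le_mul_of_abs_le (abs_mul_le_mul_of_abs_le (abs_mul_le_mul_of_abs_le
      (abs_mul_le_mul_of_abs_le (abs_of_pos (by norm_num)).le hρ) hζ) (hh.trans hg)) hb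
  have hgI : |ζ * g * I| ≤ 1 * N * |I| :=
    abs_mul_le_mul_of_abs_le (abs_mul_le_mul_of_abs_le hζ hg) le_rfl
  refine (abs_add_le_add_of_abs_le (abs_add_le_add_of_abs_le
    ((abs_sub _ _).trans (add_le_add hXflux hTflux)) hhb) hgI).trans ?_
  have hM2 : M ^ 2 ≤ M ^ 3 := pow_le_pow_right₀ hM (by norm_num)
  have hM1 : M ≤ M ^ 3 := le_self_pow₀ hM (by norm_num)
  have hNa : 0 ≤ N * |a| := mul_nonneg hN0 (abs_nonneg a)
  have hNI : 0 ≤ N * |I| := mul_nonneg hN0 (abs_nonneg I)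
  have hNN : 0 ≤ N * N := mul_nonneg hN0 hN0
  nlinarith [mul_le_mul_of_nonneg_right hM2 hNa, mul_le_mul_of_nonneg_right hM2 hNN,
    mul_le_mul_of_nonneg_right hM1 hNN, mul_le_mul_of_nonneg_right (hM.trans hM1) hNI,
    mul_le_mul_of_nonneg_right (hM.trans hM1) hNa, mul_le_mul_of_nonneg_right (hM.trans hM1) hNN]

lemma abs_mul_le_two_mul_abs_carTop_add {M ξ x t : ℝ} (hσ0 : 0 ≤ σ x t) (hμ : 1 ≤ μ)
    (hξ : |ξ| ≤ 2 * M * (μ + σ x t)) :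
    |μ * σ x t * w x t * ξ| ≤
      2 * M * (|carTop Lt T m μ τ w x t| + |μ ^ 2 * σ x t * w x t|) := by
  have hμ0 : 0 ≤ μ := zero_le_one.trans hμ
  refine (abs_mul_le_mul_of_abs_le le_rfl hξ).trans_eq ?_
  simp only [carTop, abs_mul, abs_pow, abs_of_nonneg hμ0, abs_of_nonneg hσ0]
  ring

lemma carE_mul_carTop_sq_le {M x t : ℝ} (hM : 1 ≤ M) (hρ : |ρ| ≤ M) (hrx : |carRx Lt x| ≤ M)
    (hrt : |carRt T m t| ≤ M) (hμ : 1 ≤ μ) (hσ0 : 0 ≤ σ x t)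
    (hχ : ContDiff ℝ ∞ (Function.uncurry χ)) (hw : ContDiff ℝ ∞ (Function.uncurry w))
    (hχ1 : |χ x t| ≤ 1) (hχx : |pdx χ x t| ≤ 2 * M * (μ + σ x t))
    (hχt : |pdt χ x t| ≤ 2 * M * (μ + σ x t)) :
    carE ρ Lt T m x t * χ x t * carTop Lt T m μ τ w x t ^ 2 ≤
      23 * M ^ 3 * carRem ρ Lt T m μ τ w x t
      + (pdx (ellipticFluxX ρ Lt T m μ τ χ w) x t + pdt (ellipticFluxT Lt T m μ τ χ w) x t) := by
  have hh : |μ * σ x t * w x t| ≤ |μ ^ 2 * σ x t * w x t| := by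
    simp only [abs_mul, abs_pow]
    gcongr
    exact le_self_pow₀ (hμ.trans (le_abs_self μ)) two_ne_zero
  have hremainder := abs_elliptic_remainder_le (b := μ * σ x t * pdx w x t)
    (c := μ * σ x t * pdt w x t) (I := carI2 ρ Lt T m μ τ w x t) hM hρ hrx hrt hχ1 hh
    (abs_mul_le_two_mul_abs_carTop_add hσ0 hμ hχx) (abs_mul_le_two_mul_abs_carTop_add hσ0 hμ hχt)
  rw [carE_mul_carTop_sq_eq hχ hw, carRem, carLow]
  linarith [neg_le_of_abs_le hremainder]

end EllipticEstimate

noncomputable section Cutoff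

/-- A function vanishing on the sides `x = A` and `x = B` of a rectangle and equal to `1` up to a
boundary layer of width `σ⁻¹`. -/
def spaceCutoff (A B Lt T m μ τ x t : ℝ) : ℝ := 1 - boundaryLayer A B (carSigma Lt T m μ τ x t) x

/-- A function vanishing on the sides `t = A` and `t = B` of a rectangle and equal to `1` up to a
boundary layer of width `σ⁻¹`. -/
def timeCutoff (A B Lt T m μ τ x t : ℝ) : ℝ := 1 - boundaryLayer A B (carSigma Lt T m μ τ x t) t

variable {A B M Lt T m μ τ x t : ℝ}

local notation "σ" => carSigma Lt T m μ τ

lemma contDiff_spaceCutoff :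
    ContDiff ℝ ∞ (Function.uncurry (spaceCutoff A B Lt T m μ τ)) := by
  have hσ : ContDiff ℝ ∞ (Function.uncurry σ) := contDiff_carSigma
  unfold Function.uncurry spaceCutoff boundaryLayer
  fun_prop

lemma contDiff_timeCutoff :
    ContDiff ℝ ∞ (Function.uncurry (timeCutoff A B Lt T m μ τ)) := by
  have hσ : ContDiff ℝ ∞ (Function.uncurry σ) := contDiff_carSigma
  unfold Function.uncurry timeCutoff boundaryLayer
  fun_prop

lemma hasDerivAt_spaceCutoff_snd (x t : ℝ) :
    HasDerivAt (fun s => spaceCutoff A B Lt T m μ τ x s)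
      (μ * (carRt T m t * ((x - A) * (B - x) * σ x t * boundaryLayer A B (σ x t) x))) t := by
  have hσ : HasDerivAt (fun s => σ x s) _ t := hasDerivAt_carSigma_snd x t
  exact ((hasDerivAt_boundaryLayer_rate hσ).const_sub 1).congr_deriv (by ring)

lemma abs_pdx_spaceCutoff_le (hσ0 : 0 ≤ σ x t) (hμ : 0 ≤ μ) (hx : x ∈ Icc A B) (hAB : B - A ≤ M)
    (hrx : |carRx Lt x| ≤ M) : |pdx (spaceCutoff A B Lt T m μ τ) x t| ≤ M * (μ + σ x t) := by
  have hσ : HasDerivAt (fun y => σ y t) _ x := hasDerivAt_carSigma_fst x t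
  refine (congrArg abs ((hasDerivAt_boundaryLayer hσ).const_sub 1).deriv).trans_le ?_
  rw [abs_neg]
  exact abs_deriv_boundaryLayer_le hσ0 hμ hx hAB hrx

lemma abs_pdt_spaceCutoff_le (hσ0 : 0 ≤ σ x t) (hμ : 0 ≤ μ) (hx : x ∈ Icc A B)
    (hrt : |carRt T m t| ≤ M) : |pdt (spaceCutoff A B Lt T m μ τ) x t| ≤ M * (μ + σ x t) := by
  have hσ : HasDerivAt (fun s => σ x s) _ t := hasDerivAt_carSigma_snd x t
  refine (congrArg abs ((hasDerivAt_boundaryLayer_rate hσ).const_sub 1).deriv).trans_le ?_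
  rw [abs_neg]
  exact abs_deriv_boundaryLayer_rate_le hσ0 hμ hx hrt

lemma abs_pdx_timeCutoff_le (hσ0 : 0 ≤ σ x t) (hμ : 0 ≤ μ) (ht : t ∈ Icc A B)
    (hrx : |carRx Lt x| ≤ M) : |pdx (timeCutoff A B Lt T m μ τ) x t| ≤ M * (μ + σ x t) := by
  have hσ : HasDerivAt (fun y => σ y t) _ x := hasDerivAt_carSigma_fst x t
  refine (congrArg abs ((hasDerivAt_boundaryLayer_rate hσ).const_sub 1).deriv).trans_le ?_
  rw [abs_neg]
  exact abs_deriv_boundaryLayer_rate_le hσ0 hμ ht hrx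

lemma abs_pdt_timeCutoff_le (hσ0 : 0 ≤ σ x t) (hμ : 0 ≤ μ) (ht : t ∈ Icc A B) (hAB : B - A ≤ M)
    (hrt : |carRt T m t| ≤ M) : |pdt (timeCutoff A B Lt T m μ τ) x t| ≤ M * (μ + σ x t) := by
  have hσ : HasDerivAt (fun s => σ x s) _ t := hasDerivAt_carSigma_snd x t
  refine (congrArg abs ((hasDerivAt_boundaryLayer hσ).const_sub 1).deriv).trans_le ?_
  rw [abs_neg]
  exact abs_deriv_boundaryLayer_le hσ0 hμ ht hAB hrt

end Cutoff

noncomputable section TopOrderEstimate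

/-- `M ≥ 1` bounds the parameters and the coefficients of the weight on `[L₀, L] × [0, T]`. -/
structure CarBound (L₀ L Lt ρ T m M : ℝ) : Prop where
  one_le : 1 ≤ M
  abs_rho_le : |ρ| ≤ M
  abs_m_le : |m| ≤ M
  length_le : L - L₀ ≤ M
  time_le : T ≤ M
  abs_carRx_le : ∀ x ∈ Icc L₀ L, |carRx Lt x| ≤ M
  abs_carRt_le : ∀ t ∈ Icc 0 T, |carRt T m t| ≤ M

lemma exists_carBound (L₀ L Lt ρ T m : ℝ) : ∃ M, CarBound L₀ L Lt ρ T m M := by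
  obtain ⟨Mx, hMx⟩ := (isCompact_Icc (a := L₀) (b := L)).exists_bound_of_continuousOn
    (f := carRx Lt) (by unfold carRx; fun_prop)
  obtain ⟨Mt, hMt⟩ := (isCompact_Icc (a := 0) (b := T)).exists_bound_of_continuousOn
    (f := carRt T m) (by unfold carRt; fun_prop)
  have hρ := abs_nonneg ρ
  have hm := abs_nonneg m
  have hL := abs_nonneg (L - L₀)
  have hT := abs_nonneg T
  have hx := abs_nonneg Mx
  have ht := abs_nonneg Mt
  refine ⟨1 + |ρ| + |m| + |L - L₀| + |T| + |Mx| + |Mt|, by linarith, by linarith, by linarith, ?_,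
    ?_, fun x hxI => ?_, fun t htI => ?_⟩
  · linarith [le_abs_self (L - L₀)]
  · linarith [le_abs_self T]
  · linarith [(hMx x hxI).trans (le_abs_self Mx), Real.norm_eq_abs (carRx Lt x)]
  · linarith [(hMt t htI).trans (le_abs_self Mt), Real.norm_eq_abs (carRt T m t)]

lemma exists_pos_le_carE {L Lt ρ T m : ℝ} (hL : L < Lt)
    (hmT : (m * T) ^ 2 < 4 * ρ * (Lt - L) ^ 2) :
    ∃ c > 0, ∀ x ≤ L, ∀ t ∈ Icc 0 T, c ≤ carE ρ Lt T m x t := by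
  have hα : 0 < Lt - L := sub_pos.2 hL
  have hgap : 0 < ρ * (Lt - L) ^ 2 - (m * T) ^ 2 / 4 := by linarith
  have hρ : 0 ≤ ρ := by
    by_contra! hneg
    nlinarith [sq_nonneg (m * T), sq_nonneg (Lt - L)]
  refine ⟨8 * (Lt - L) * (ρ * (Lt - L) ^ 2 - (m * T) ^ 2 / 4),
    mul_pos (mul_pos (by norm_num) hα) hgap, fun x hx t ht => ?_⟩
  have htime : m ^ 2 * (t - T / 2) ^ 2 ≤ (m * T) ^ 2 / 4 := by
    have hdist : (t - T / 2) ^ 2 ≤ (T / 2) ^ 2 :=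
      sq_le_sq' (by linarith [ht.1]) (by linarith [ht.2])
    linarith [mul_le_mul_of_nonneg_left hdist (sq_nonneg m)]
  have hspace : ρ * (Lt - L) ^ 2 ≤ ρ * (Lt - x) ^ 2 := by gcongr
  have hgap_le : ρ * (Lt - L) ^ 2 - (m * T) ^ 2 / 4
      ≤ ρ * (Lt - x) ^ 2 - m ^ 2 * (t - T / 2) ^ 2 := by linarith
  calc 8 * (Lt - L) * (ρ * (Lt - L) ^ 2 - (m * T) ^ 2 / 4)
      ≤ 8 * (Lt - x) * (ρ * (Lt - x) ^ 2 - m ^ 2 * (t - T / 2) ^ 2) := by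
        gcongr
        linarith
    _ = carE ρ Lt T m x t := by
        simp only [carE, carRx, carRt]
        ring

variable {L₀ L Lt ρ T m M μ τ : ℝ} {w : ℝ → ℝ → ℝ}

local notation "σ" => carSigma Lt T m μ τ

lemma abs_carTop_mul_le_carRem {d x t : ℝ} (hd : d ≤ carLow Lt T m μ τ w x t) :
    |carTop Lt T m μ τ w x t| * d ≤ carRem ρ Lt T m μ τ w x t := by
  have hlow := carLow_nonneg (Lt := Lt) (T := T) (m := m) (μ := μ) (τ := τ) (w := w) x t
  rw [carRem, mul_comm]
  refine mul_le_mul hd ?_ (abs_nonneg _) hlow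
  linarith [abs_nonneg (carI2 ρ Lt T m μ τ w x t)]

lemma leUpToDiv_spaceLayer (hM : CarBound L₀ L Lt ρ T m M) (hμ : 1 ≤ μ) (hτ : 0 < τ)
    (hw : ContDiff ℝ ∞ (Function.uncurry w)) :
    LeUpToDiv L₀ L 0 T
      (fun x t => (L - L₀) ^ 2 * (boundaryLayer L₀ L (σ x t) x * carTop Lt T m μ τ w x t ^ 2))
      (fun x t => 11 * M ^ 2 * carRem ρ Lt T m μ τ w x t) := by
  refine ⟨fun x t => boundaryFlux L₀ L μ (fun y => σ y t) (fun _ => 1) (fun y => w y t) x,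
    fun _ _ => 0, ?_, contDiff_const, fun t => ⟨boundaryFlux_left, boundaryFlux_right⟩,
    fun x => ⟨rfl, rfl⟩, fun x hx t _ => ?_⟩
  · have hσ : ContDiff ℝ ∞ (Function.uncurry σ) := contDiff_carSigma
    unfold Function.uncurry boundaryFlux boundaryLayer
    fun_prop
  have hM1 := hM.one_le
  have hσ : HasDerivAt (fun y => σ y t) _ x := hasDerivAt_carSigma_fst x t
  have hlayer := boundaryLayer_mul_sq_le (z := 0) hM1 hμ hx hM.length_le (hM.abs_carRx_le x hx)
    (abs_zero.trans_le (zero_le_one.trans hM1)) (carSigma_pos (zero_lt_one.trans_le hμ) hτ x t).le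
    abs_one.le hσ ((hasDerivAt_const x 1).congr_deriv (mul_zero μ).symm) (hasDerivAt_pdx hw x t)
  have hlow : |μ * σ x t * pdx w x t| + |μ ^ 2 * σ x t * w x t| ≤ carLow Lt T m μ τ w x t := by
    rw [carLow]
    linarith [abs_nonneg (μ * σ x t * pdt w x t)]
  have hrem := mul_le_mul_of_nonneg_left (abs_carTop_mul_le_carRem (ρ := ρ) hlow)
    (by positivity : 0 ≤ 11 * M ^ 2)
  have hpdt : pdt (fun _ _ => 0) x t = 0 := deriv_const t 0
  simp only [one_mul] at hlayer
  unfold carTop at hrem ⊢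
  rw [hpdt, pdx]
  linarith

lemma leUpToDiv_timeLayer (hM : CarBound L₀ L Lt ρ T m M) (hμ : 1 ≤ μ) (hτ : 0 < τ)
    (hw : ContDiff ℝ ∞ (Function.uncurry w)) :
    LeUpToDiv L₀ L 0 T
      (fun x t => T ^ 2 * (spaceCutoff L₀ L Lt T m μ τ x t * boundaryLayer 0 T (σ x t) t *
        carTop Lt T m μ τ w x t ^ 2))
      (fun x t => 11 * M ^ 2 * carRem ρ Lt T m μ τ w x t) := by
  refine ⟨fun _ _ => 0, fun x t => boundaryFlux 0 T μ (fun s => σ x s)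
      (fun s => spaceCutoff L₀ L Lt T m μ τ x s) (fun s => w x s) t,
    contDiff_const, ?_, fun t => ⟨rfl, rfl⟩, fun x => ⟨boundaryFlux_left, boundaryFlux_right⟩,
    fun x hx t ht => ?_⟩
  · have hσ : ContDiff ℝ ∞ (Function.uncurry σ) := contDiff_carSigma
    have hX : ContDiff ℝ ∞ (Function.uncurry (spaceCutoff L₀ L Lt T m μ τ)) := contDiff_spaceCutoff
    unfold Function.uncurry boundaryFlux boundaryLayer
    fun_prop
  have hσ0 := (carSigma_pos (Lt := Lt) (T := T) (m := m) (zero_lt_one.trans_le hμ) hτ x t).le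
  have hrt := hM.abs_carRt_le t ht
  have hσ : HasDerivAt (fun s => σ x s) _ t := hasDerivAt_carSigma_snd x t
  have hX := hasDerivAt_spaceCutoff_snd (A := L₀) (B := L) (Lt := Lt) (T := T) (m := m) (μ := μ)
    (τ := τ) x t
  have hXrate := (abs_mul_le_mul_of_abs_le hrt (abs_rate_mul_boundaryLayer_le_one hσ0 hx)).trans_eq
    (mul_one M)
  have hlayer := boundaryLayer_mul_sq_le hM.one_le hμ ht ((sub_zero T).trans_le hM.time_le) hrt
    hXrate hσ0 (abs_one_sub_boundaryLayer_le_one hσ0 hx) hσ hX (hasDerivAt_pdt hw x t)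
  have hlow : |μ * σ x t * pdt w x t| + |μ ^ 2 * σ x t * w x t| ≤ carLow Lt T m μ τ w x t := by
    rw [carLow]
    linarith [abs_nonneg (μ * σ x t * pdx w x t)]
  have hrem := mul_le_mul_of_nonneg_left (abs_carTop_mul_le_carRem (ρ := ρ) hlow)
    (by positivity : 0 ≤ 11 * M ^ 2)
  have hpdx : pdx (fun _ _ => 0) x t = 0 := deriv_const x 0
  unfold carTop at hrem ⊢
  rw [hpdx, pdt]
  linarith

lemma leUpToDiv_interior (hM : CarBound L₀ L Lt ρ T m M) (hμ : 1 ≤ μ) (hτ : 0 < τ)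
    (hw : ContDiff ℝ ∞ (Function.uncurry w)) :
    LeUpToDiv L₀ L 0 T
      (fun x t => carE ρ Lt T m x t * (spaceCutoff L₀ L Lt T m μ τ x t *
        timeCutoff 0 T Lt T m μ τ x t) * carTop Lt T m μ τ w x t ^ 2)
      (fun x t => 23 * M ^ 3 * carRem ρ Lt T m μ τ w x t) := by
  have hX : ContDiff ℝ ∞ (Function.uncurry (spaceCutoff L₀ L Lt T m μ τ)) := contDiff_spaceCutoff
  have hY : ContDiff ℝ ∞ (Function.uncurry (timeCutoff 0 T Lt T m μ τ)) := contDiff_timeCutoff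
  have hXY : ContDiff ℝ ∞ (Function.uncurry fun x t =>
      spaceCutoff L₀ L Lt T m μ τ x t * timeCutoff 0 T Lt T m μ τ x t) := hX.mul hY
  refine ⟨ellipticFluxX ρ Lt T m μ τ _ w, ellipticFluxT Lt T m μ τ _ w,
    contDiff_ellipticFluxX hXY hw, contDiff_ellipticFluxT hXY hw,
    fun t => ?_, fun x => ?_, fun x hx t ht => ?_⟩
  · simp [ellipticFluxX, spaceCutoff, boundaryLayer]
  · simp [ellipticFluxT, timeCutoff, boundaryLayer]
  have hμ0 : 0 ≤ μ := zero_le_one.trans hμ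
  have hσ0 := (carSigma_pos (Lt := Lt) (T := T) (m := m) (zero_lt_one.trans_le hμ) hτ x t).le
  have hrx := hM.abs_carRx_le x hx
  have hrt := hM.abs_carRt_le t ht
  have hX1 := abs_one_sub_boundaryLayer_le_one hσ0 hx
  have hY1 := abs_one_sub_boundaryLayer_le_one hσ0 ht
  refine carE_mul_carTop_sq_le hM.one_le hM.abs_rho_le hrx hrt hμ hσ0 hXY hw
    ((abs_mul_le_mul_of_abs_le hX1 hY1).trans_eq (mul_one 1)) ?_ ?_
  · rw [mul_assoc]
    exact abs_pdx_mul_le hX hY hX1 hY1 (abs_pdx_spaceCutoff_le hσ0 hμ0 hx hM.length_le hrx)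
      (abs_pdx_timeCutoff_le hσ0 hμ0 ht hrx)
  · rw [mul_assoc]
    exact abs_pdt_mul_le hX hY hX1 hY1 (abs_pdt_spaceCutoff_le hσ0 hμ0 hx hrt)
      (abs_pdt_timeCutoff_le hσ0 hμ0 ht ((sub_zero T).trans_le hM.time_le) hrt)

lemma exists_carTop_sq_leUpToDiv (hL₀ : L₀ < L) (hL : L < Lt) (hT : 0 < T)
    (hmT : (m * T) ^ 2 < 4 * ρ * (Lt - L) ^ 2) :
    ∃ K ≥ 0, ∀ μ ≥ 1, ∀ τ > 0, ∀ w, ContDiff ℝ ∞ (Function.uncurry w) →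
      LeUpToDiv L₀ L 0 T (fun x t => carTop Lt T m μ τ w x t ^ 2)
        (fun x t => K * carRem ρ Lt T m μ τ w x t) := by
  obtain ⟨M, hM⟩ := exists_carBound L₀ L Lt ρ T m
  obtain ⟨c, hc, hcE⟩ := exists_pos_le_carE hL hmT
  have hM1 := hM.one_le
  have hlength : 0 < (L - L₀) ^ 2 := pow_pos (sub_pos.2 hL₀) 2
  refine ⟨((L - L₀) ^ 2)⁻¹ * (11 * M ^ 2) + (T ^ 2)⁻¹ * (11 * M ^ 2) + c⁻¹ * (23 * M ^ 3),
    by positivity, fun μ hμ τ hτ w hw => ?_⟩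
  refine (((leUpToDiv_spaceLayer hM hμ hτ hw).const_mul (inv_nonneg.2 hlength.le)).add
    ((leUpToDiv_timeLayer hM hμ hτ hw).const_mul (by positivity : 0 ≤ (T ^ 2)⁻¹))).add
    ((leUpToDiv_interior hM hμ hτ hw).const_mul (inv_nonneg.2 hc.le)) |>.mono
    fun x hx t ht => ?_
  have hσ0 := (carSigma_pos (Lt := Lt) (T := T) (m := m) (zero_lt_one.trans_le hμ) hτ x t).le
  have hX : 0 ≤ spaceCutoff L₀ L Lt T m μ τ x t := sub_nonneg.2 (boundaryLayer_le_one hσ0 hx)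
  have hY : 0 ≤ timeCutoff 0 T Lt T m μ τ x t := sub_nonneg.2 (boundaryLayer_le_one hσ0 ht)
  have hXY : spaceCutoff L₀ L Lt T m μ τ x t * timeCutoff 0 T Lt T m μ τ x t *
      carTop Lt T m μ τ w x t ^ 2 ≤ c⁻¹ * (carE ρ Lt T m x t * (spaceCutoff L₀ L Lt T m μ τ x t *
        timeCutoff 0 T Lt T m μ τ x t) * carTop Lt T m μ τ w x t ^ 2) := by
    rw [← mul_assoc, ← mul_assoc]
    refine mul_le_mul_of_nonneg_right (le_mul_of_one_le_left (mul_nonneg hX hY) ?_) (sq_nonneg _)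
    rw [← div_eq_inv_mul]
    exact (one_le_div hc).2 (hcE x hx.2 t ht)
  -- `1 = e₁ + (1 - e₁) e₂ + (1 - e₁) (1 - e₂)` for the boundary layers `e₁` and `e₂`
  rw [inv_mul_cancel_left₀ hlength.ne', inv_mul_cancel_left₀ (pow_pos hT 2).ne']
  unfold spaceCutoff timeCutoff at *
  linarith

end TopOrderEstimate

section CrossTerm

variable {L₀ L Lt ρ T m μ τ : ℝ} {v w : ℝ → ℝ → ℝ}

lemma exists_mul_carTop_sq_leUpToDiv (hL₀ : L₀ < L) (hL : L < Lt) (hT : 0 < T)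
    (hmT : (m * T) ^ 2 < 4 * ρ * (Lt - L) ^ 2) {k : ℝ} (hk : 0 ≤ k) :
    ∃ C ≥ 0, ∀ μ ≥ 1, ∀ τ > 0, ∀ w, ContDiff ℝ ∞ (Function.uncurry w) →
      LeUpToDiv L₀ L 0 T (fun x t => k * carTop Lt T m μ τ w x t ^ 2)
        (fun x t => carI2 ρ Lt T m μ τ w x t ^ 2 + C * carLow Lt T m μ τ w x t ^ 2) := by
  obtain ⟨K, hK, htop⟩ := exists_carTop_sq_leUpToDiv hL₀ hL hT hmT
  refine ⟨k * K ^ 2 + 2 * k * K + (k * K) ^ 2, by positivity, fun μ hμ τ hτ w hw => ?_⟩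
  refine ((htop μ hμ τ hτ w hw).const_mul (mul_nonneg zero_le_two hk)).mono fun x _ t _ => ?_
  rw [carRem]
  generalize carLow Lt T m μ τ w x t = N
  rw [← sq_abs (carTop Lt T m μ τ w x t), ← sq_abs (carI2 ρ Lt T m μ τ w x t)]
  nlinarith [mul_nonneg hk (sq_nonneg (|carTop Lt T m μ τ w x t| - K * N)),
    sq_nonneg (|carI2 ρ Lt T m μ τ w x t| - k * K * N)]

lemma exists_cross_leUpToDiv_carLow (hL₀ : L₀ < L) (hL : L < Lt) (hT : 0 < T)
    (hmT : (m * T) ^ 2 < 4 * ρ * (Lt - L) ^ 2) :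
    ∃ C ≥ 0, ∀ μ ≥ 1, ∀ τ > 0, ∀ v w, ContDiff ℝ ∞ (Function.uncurry v) →
      (w = fun x t => carTheta Lt T m μ τ x t * v x t) →
      LeUpToDiv L₀ L 0 T
        (fun x t => 2 * (carI1 ρ Lt T m μ τ w x t * carI2 ρ Lt T m μ τ w x t))
        (fun x t => 2 * (carTheta Lt T m μ τ x t ^ 2 * carP ρ v x t ^ 2)
          + C * carLow Lt T m μ τ w x t ^ 2) := by
  obtain ⟨M, hM⟩ := exists_carBound L₀ L Lt ρ T m
  have hk : 0 ≤ 784 * M ^ 8 := by positivity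
  obtain ⟨C, hC, habsorb⟩ := exists_mul_carTop_sq_leUpToDiv hL₀ hL hT hmT hk
  refine ⟨784 * M ^ 8 + C, by positivity, fun μ hμ τ hτ v w hv hw => ?_⟩
  have hw_smooth : ContDiff ℝ ∞ (Function.uncurry w) := hw ▸ contDiff_carTheta_mul Lt T m μ τ hv
  refine (habsorb μ hμ τ hτ w hw_smooth).mono fun x hx t ht => ?_
  have hS := abs_carS_le (τ := τ) (w := w) hM.one_le hμ hM.abs_rho_le hM.abs_m_le
    (hM.abs_carRx_le x hx) (hM.abs_carRt_le t ht)
  have hS_sq : 2 * carS ρ Lt T m μ τ w x t ^ 2 ≤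
      784 * M ^ 8 * (carTop Lt T m μ τ w x t ^ 2 + carLow Lt T m μ τ w x t ^ 2) := by
    have hsum : (|carTop Lt T m μ τ w x t| + carLow Lt T m μ τ w x t) ^ 2 ≤
        2 * (carTop Lt T m μ τ w x t ^ 2 + carLow Lt T m μ τ w x t ^ 2) := by
      simpa only [sq_abs] using
        add_sq_le (a := |carTop Lt T m μ τ w x t|) (b := carLow Lt T m μ τ w x t)
    rw [← sq_abs (carS ρ Lt T m μ τ w x t)]
    nlinarith [pow_le_pow_left₀ (abs_nonneg _) hS 2,
      mul_le_mul_of_nonneg_left hsum (by positivity : 0 ≤ M ^ 8)]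
  rw [← mul_pow, carTheta_mul_carP ρ Lt T m μ τ hv hw x t]
  nlinarith [sq_nonneg (carI1 ρ Lt T m μ τ w x t),
    sq_nonneg (carI1 ρ Lt T m μ τ w x t + carI2 ρ Lt T m μ τ w x t
      + 2 * carS ρ Lt T m μ τ w x t)]

lemma carLow_sq_le (hτ : 1 ≤ τ) (x t : ℝ) :
    carLow Lt T m μ τ w x t ^ 2 ≤
      3 * (τ ^ 2 * μ ^ 4 * ((pdx w x t ^ 2 + pdt w x t ^ 2) * carEta Lt T m μ x t ^ 2)
        + τ ^ 4 * μ ^ 6 * (w x t ^ 2 * carEta Lt T m μ x t ^ 2)) := by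
  have hτ_pow : τ ^ 2 ≤ τ ^ 4 := pow_le_pow_right₀ hτ (by norm_num)
  have hw_sq : 0 ≤ μ ^ 6 * (w x t ^ 2 * carEta Lt T m μ x t ^ 2) := by positivity
  have hcauchy (b c g : ℝ) : (|b| + |c| + |g|) ^ 2 ≤ 3 * (b ^ 2 + c ^ 2 + g ^ 2) := by
    nlinarith [sq_nonneg (|b| - |c|), sq_nonneg (|b| - |g|), sq_nonneg (|c| - |g|), sq_abs b,
      sq_abs c, sq_abs g]
  refine (hcauchy _ _ _).trans ?_
  rw [carSigma, carQ]
  linarith [mul_le_mul_of_nonneg_right hτ_pow hw_sq]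

lemma exists_cross_leUpToDiv (hL₀ : L₀ < L) (hL : L < Lt) (hT : 0 < T)
    (hmT : (m * T) ^ 2 < 4 * ρ * (Lt - L) ^ 2) :
    ∃ C > 0, ∀ μ ≥ 1, ∀ τ ≥ 1, ∀ v w, ContDiff ℝ ∞ (Function.uncurry v) →
      (w = fun x t => carTheta Lt T m μ τ x t * v x t) →
      LeUpToDiv L₀ L 0 T
        (fun x t => 2 * (carI1 ρ Lt T m μ τ w x t * carI2 ρ Lt T m μ τ w x t))
        (fun x t => C * (carTheta Lt T m μ τ x t ^ 2 * carP ρ v x t ^ 2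
          + τ ^ 2 * μ ^ 4 * ((pdx w x t ^ 2 + pdt w x t ^ 2) * carEta Lt T m μ x t ^ 2)
          + τ ^ 4 * μ ^ 6 * (w x t ^ 2 * carEta Lt T m μ x t ^ 2))) := by
  obtain ⟨C, hC, hcross⟩ := exists_cross_leUpToDiv_carLow hL₀ hL hT hmT
  refine ⟨2 + 3 * C, by positivity, fun μ hμ τ hτ v w hv hw => ?_⟩
  refine (hcross μ hμ τ (zero_lt_one.trans_le hτ) v w hv hw).mono fun x _ t _ => ?_
  have hlow := mul_le_mul_of_nonneg_left
    (carLow_sq_le (Lt := Lt) (T := T) (m := m) (μ := μ) (w := w) hτ x t) hC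
  have hP : 0 ≤ 3 * C * (carTheta Lt T m μ τ x t ^ 2 * carP ρ v x t ^ 2) := by positivity
  have hgrad : 0 ≤ τ ^ 2 * μ ^ 4 *
      ((pdx w x t ^ 2 + pdt w x t ^ 2) * carEta Lt T m μ x t ^ 2) := by positivity
  have hzero : 0 ≤ τ ^ 4 * μ ^ 6 * (w x t ^ 2 * carEta Lt T m μ x t ^ 2) := by positivity
  linarith

lemma contDiff_carP (ρ : ℝ) (hv : ContDiff ℝ ∞ (Function.uncurry v)) :
    ContDiff ℝ ∞ (Function.uncurry (carP ρ v)) :=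
  (contDiff_pdx (contDiff_pdt (contDiff_pdt hv))).sub
    (contDiff_const.mul (contDiff_pdx (contDiff_pdx (contDiff_pdx hv))))

lemma contDiff_carI1_mul_carI2 (hw : ContDiff ℝ ∞ (Function.uncurry w)) :
    ContDiff ℝ ∞ (Function.uncurry fun x t =>
      carI1 ρ Lt T m μ τ w x t * carI2 ρ Lt T m μ τ w x t) := by
  have hqx := contDiff_pdx (contDiff_carQ Lt T m μ τ)
  have hqt := contDiff_pdt (contDiff_carQ Lt T m μ τ)
  have hwx := contDiff_pdx hw
  have hwt := contDiff_pdt hw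
  have hwxx := contDiff_pdx hwx
  have hwxt := contDiff_pdx hwt
  have hwtt := contDiff_pdt hwt
  have hwxxx := contDiff_pdx hwxx
  have hwxtt := contDiff_pdx hwtt
  unfold Function.uncurry carI1 carI2
  fun_prop

theorem stmt_5_general (L₀ L Lt ρ T m : ℝ) (hL₀ : L₀ < L) (hL : L < Lt) (hT : 0 < T)
    (hmT : (m * T) ^ 2 < 4 * ρ * (Lt - L) ^ 2) :
    (∀ μ τ : ℝ, ∀ v w : ℝ → ℝ → ℝ, ContDiff ℝ ∞ (Function.uncurry v) →
      (w = fun x t => carTheta Lt T m μ τ x t * v x t) → ∀ x t : ℝ,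
        carTheta Lt T m μ τ x t * carP ρ v x t =
          carI1 ρ Lt T m μ τ w x t + carI2 ρ Lt T m μ τ w x t + carS ρ Lt T m μ τ w x t) ∧
    ∃ C > 0, ∀ μ ≥ 1, ∀ τ ≥ 1, ∀ v w : ℝ → ℝ → ℝ, ContDiff ℝ ∞ (Function.uncurry v) →
      (w = fun x t => carTheta Lt T m μ τ x t * v x t) →
      2 * rectIntegral L₀ L 0 T
          (fun x t => carI1 ρ Lt T m μ τ w x t * carI2 ρ Lt T m μ τ w x t) ≤
        C * (rectIntegral L₀ L 0 T (fun x t => carTheta Lt T m μ τ x t ^ 2 * carP ρ v x t ^ 2)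
          + τ ^ 2 * μ ^ 4 * rectIntegral L₀ L 0 T
              (fun x t => (pdx w x t ^ 2 + pdt w x t ^ 2) * carEta Lt T m μ x t ^ 2)
          + τ ^ 4 * μ ^ 6 * rectIntegral L₀ L 0 T
              (fun x t => w x t ^ 2 * carEta Lt T m μ x t ^ 2)) := by
  refine ⟨fun μ τ v w hv hw => carTheta_mul_carP ρ Lt T m μ τ hv hw, ?_⟩
  obtain ⟨C, hC, hcross⟩ := exists_cross_leUpToDiv hL₀ hL hT hmT
  refine ⟨C, hC, fun μ hμ τ hτ v w hv hw => ?_⟩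
  have hw_smooth : ContDiff ℝ ∞ (Function.uncurry w) := hw ▸ contDiff_carTheta_mul Lt T m μ τ hv
  have hη := contDiff_carEta Lt T m μ
  have hθ : ContDiff ℝ ∞ (Function.uncurry (carTheta Lt T m μ τ)) :=
    (contDiff_carQ Lt T m μ τ).exp
  have hI : Continuous (Function.uncurry fun x t =>
      carI1 ρ Lt T m μ τ w x t * carI2 ρ Lt T m μ τ w x t) :=
    (contDiff_carI1_mul_carI2 hw_smooth).continuous
  have hPv : Continuous (Function.uncurry fun x t =>
      carTheta Lt T m μ τ x t ^ 2 * carP ρ v x t ^ 2) :=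
    ((hθ.pow 2).mul ((contDiff_carP ρ hv).pow 2)).continuous
  have hgrad : Continuous (Function.uncurry fun x t =>
      (pdx w x t ^ 2 + pdt w x t ^ 2) * carEta Lt T m μ x t ^ 2) :=
    ((((contDiff_pdx hw_smooth).pow 2).add ((contDiff_pdt hw_smooth).pow 2)).mul
      (hη.pow 2)).continuous
  have hw_sq : Continuous (Function.uncurry fun x t => w x t ^ 2 * carEta Lt T m μ x t ^ 2) :=
    ((hw_smooth.pow 2).mul (hη.pow 2)).continuous
  rw [← rectIntegral_const_mul, ← rectIntegral_const_mul_add_add hPv hgrad hw_sq]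
  exact (hcross μ hμ τ hτ v w hv hw).rectIntegral_le hL₀.le hT.le (continuous_const.mul hI)
    (continuous_const.mul ((hPv.add (continuous_const.mul hgrad)).add
      (continuous_const.mul hw_sq)))

end CrossTerm

/-- Decomposition of the conjugated Carleman operator `θP` into `I₁ + I₂ + S`, and the
upper bound for the cross term `2∫∫ I₁(ṽ)I₂(ṽ)` (paper, Step 2 of the gradient-property
proof). -/
theorem stmt_5 (L₀ L Lt ρ T m μ τ : ℝ)
    (h0 : 0 ≤ L₀) (h1 : L₀ < L) (h2 : L < Lt) (hρ : 0 < ρ) (hT : 0 < T)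
    (hm0 : 0 < m) (hm1 : m < 1) (hmT : m * T < Real.sqrt ρ * (Lt - L) / 2)
    (hμ : 1 ≤ μ) (hτ : 1 ≤ τ) :
    (∀ v w : ℝ → ℝ → ℝ, (∀ n : ℕ, ContDiff ℝ n (Function.uncurry v)) →
      (∀ y s : ℝ, w y s = carTheta Lt T m μ τ y s * v y s) →
      ∀ x t : ℝ,
        carTheta Lt T m μ τ x t * carP ρ v x t =
          carI1 ρ Lt T m μ τ w x t + carI2 ρ Lt T m μ τ w x t + carS ρ Lt T m μ τ w x t) ∧
    (∃ μ₀ ≥ (1:ℝ), ∃ C > (0:ℝ), ∀ μ' ≥ μ₀, ∀ τ' ≥ (1:ℝ),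
      ∀ v w : ℝ → ℝ → ℝ, (∀ n : ℕ, ContDiff ℝ n (Function.uncurry v)) →
        (∀ y s : ℝ, w y s = carTheta Lt T m μ' τ' y s * v y s) →
        2 * (∫ t in (0:ℝ)..T, (∫ x in L₀..L,
              carI1 ρ Lt T m μ' τ' w x t * carI2 ρ Lt T m μ' τ' w x t)) ≤
        C * ((∫ t in (0:ℝ)..T, (∫ x in L₀..L,
                (carTheta Lt T m μ' τ' x t) ^ 2 * (carP ρ v x t) ^ 2))
          + τ' ^ 2 * μ' ^ 4 * (∫ t in (0:ℝ)..T, (∫ x in L₀..L,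
                ((pdx w x t) ^ 2 + (pdt w x t) ^ 2) * (carEta Lt T m μ' x t) ^ 2))
          + τ' ^ 4 * μ' ^ 6 * (∫ t in (0:ℝ)..T, (∫ x in L₀..L,
                (w x t) ^ 2 * (carEta Lt T m μ' x t) ^ 2)))) := by
  have hmT_sq : (m * T) ^ 2 < 4 * ρ * (Lt - L) ^ 2 := by
    have hsq := pow_lt_pow_left₀ hmT (mul_nonneg hm0.le hT.le) two_ne_zero
    rw [div_pow, mul_pow √ρ, Real.sq_sqrt hρ.le] at hsq
    linarith [mul_pos hρ (pow_pos (sub_pos.2 h2) 2)]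
  obtain ⟨hidentity, C, hC, hcross⟩ := stmt_5_general L₀ L Lt ρ T m h1 h2 hT hmT_sq
  exact ⟨fun v w hv hw => hidentity μ τ v w (contDiff_infty.2 hv) (funext₂ hw),
    1, le_rfl, C, hC, fun μ' hμ' τ' hτ' v w hv hw =>
      hcross μ' hμ' τ' hτ' v w (contDiff_infty.2 hv) (funext₂ hw)⟩
end

section
/- Consider the elastic von Karman beam system on [L₀,L]×[0,T+h] and its time-difference (u_d, v_d) with step h, and let M > 0. Assume the overdetermined boundary conditions u_d(L₀,t) = u_dx(L₀,t) = u_dxx(L₀,t) = u_dxxx(L₀,t) = v_d(L₀,t) = v_dx(L₀,t) = 0 and u_d(L,t) = u_dxx(L,t) = v_d(L,t) = 0 for all t ∈ [0,T], and assume T > 10(L − L₀)(μ₂/λ₂ + ρ₂)^{1/2}. Then there exists a constant C > 0, depending only on β₂, μ₂, λ₂, ρ₂, L₀, L, T, h, M, such that for every M-bounded solution (u,v) the observability inequality holds: E_d(T) + E_d(0) ≤ C ∫₀^T ∫_{L₀}^{L} ( u_dt² + u_dx² + u_d² + v_d² ) dx dt. -/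
open MeasureTheory

noncomputable section

/-- Time difference with step `h`. -/
def tdiff (h : ℝ) (f : ℝ → ℝ → ℝ) : ℝ → ℝ → ℝ := fun x t => f x (t + h) - f x t

/-- The elastic full von Karman beam system on `[L₀,L] × [0,Th]`. -/
def VKBeam (β₂ μ₂ lam₂ ρ₂ L₀ L Th : ℝ) (u v : ℝ → ℝ → ℝ) : Prop :=
  ∀ x ∈ Set.Icc L₀ L, ∀ t ∈ Set.Icc (0:ℝ) Th,
    β₂ * pdt (pdt u) x t - μ₂ * pdx (pdx (pdt (pdt u))) x t
        + lam₂ * pdx (pdx (pdx (pdx u))) x t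
        - pdx (fun y s => pdx u y s * (pdx v y s + (pdx u y s) ^ 2 / 2)) x t = 0 ∧
    ρ₂ * pdt (pdt v) x t - pdx (fun y s => pdx v y s + (pdx u y s) ^ 2 / 2) x t = 0

/-- `f` has all partial derivatives of order at most 4 bounded by `M` on
`[L₀,L] × [0,Th]`. -/
def MBounded (M L₀ L Th : ℝ) (f : ℝ → ℝ → ℝ) : Prop :=
  ∀ k : ℕ, k ≤ 4 → ∀ x ∈ Set.Icc L₀ L, ∀ t ∈ Set.Icc (0:ℝ) Th,
    ‖iteratedFDeriv ℝ k (Function.uncurry f) (x, t)‖ ≤ M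

/-- Energy of the time difference `(u_d, v_d)`. -/
def Ed (β₂ μ₂ lam₂ ρ₂ L₀ L h : ℝ) (u v : ℝ → ℝ → ℝ) (t : ℝ) : ℝ :=
  (1 / 2) * (β₂ * (∫ x in L₀..L, (pdt (tdiff h u) x t) ^ 2)
    + μ₂ * (∫ x in L₀..L, (pdx (pdt (tdiff h u)) x t) ^ 2)
    + lam₂ * (∫ x in L₀..L, (pdx (pdx (tdiff h u)) x t) ^ 2)
    + (∫ x in L₀..L, (pdx (tdiff h v) x t
        + (1 / 2) * pdx (tdiff h u) x t * (pdx u x (t + h) + pdx u x t)) ^ 2)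
    + ρ₂ * (∫ x in L₀..L, (pdt (tdiff h v) x t) ^ 2))

end

/-!
The product `f g` has time difference `⟨f⟩ g_d + ⟨g⟩ f_d`, where `⟨·⟩` is the average of the values
at `t` and `t + h`. Hence the time difference `(w, z) = (u_d, v_d)` solves a linear beam system
whose coefficients `a = ⟨u_x⟩` and `b = ⟨v_x + u_x² / 2⟩` are bounded in terms of `M`, and `E_d` is
its natural energy `E`.

The multipliers `w_t` and `z_t` bound `dE/dt`, and the multipliers `(x - L) w_x - w` and
`(x - L) z_x` give a momentum `P` with `dP/dt ≤ -E` up to errors; all boundary terms vanish. The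
errors are products of `w_x` with energy quantities, so they are at most `ε E` plus a multiple of
the observation. Since `E` is almost constant, `T (E(0) + E(T)) ≤ 2 ∫ E`, while
`∫ E ≤ |P(0)| + |P(T)|` and `|P| ≤ (L - L₀) κ E`, all up to such errors, with
`κ = √(max (μ₂ / λ₂) ρ₂)`. The energy terms can be absorbed when `T > 2 (L - L₀) κ`. The
lower-order part of the bound on `P` is a multiple of `∫ (w_x² + w²)`, whose values at `0` and `T`
are controlled by the time integrals of itself and of its derivative.
-/

noncomputable section

open Set Function
open scoped ContDiff

/-! ### Partial derivatives of jointly smooth functions -/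

/-- Joint `C^∞` regularity of a function of space and time. It is a class so that instance search
finds the smoothness of densities that are polynomial in the unknowns and their derivatives. -/
class JointlySmooth (f : ℝ → ℝ → ℝ) : Prop where
  contDiff : ContDiff ℝ ∞ (uncurry f)

namespace JointlySmooth

variable (f : ℝ → ℝ → ℝ) [hf : JointlySmooth f]

theorem continuous_uncurry : Continuous (uncurry f) := hf.contDiff.continuous

theorem continuous_left (t : ℝ) : Continuous fun x => f x t :=
  (continuous_uncurry f).comp (by fun_prop : Continuous fun x : ℝ => (x, t))

theorem differentiableAt_uncurry (p : ℝ × ℝ) : DifferentiableAt ℝ (uncurry f) p :=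
  hf.contDiff.differentiable (by simp) p

theorem contDiff_fderiv : ContDiff ℝ ∞ (fderiv ℝ (uncurry f)) :=
  hf.contDiff.fderiv_right (by simp)

theorem hasDerivAt_left (x t : ℝ) : HasDerivAt (fun y => f y t) (pdx f x t) x :=
  (DifferentiableAt.fun_comp' (f := fun y : ℝ => (y, t)) x (differentiableAt_uncurry f (x, t))
    (by fun_prop)).hasDerivAt

theorem hasDerivAt_right (x t : ℝ) : HasDerivAt (fun s => f x s) (pdt f x t) t :=
  (DifferentiableAt.fun_comp' (f := fun s : ℝ => (x, s)) t (differentiableAt_uncurry f (x, t))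
    (by fun_prop)).hasDerivAt

theorem pdx_eq_fderiv (x t : ℝ) : pdx f x t = fderiv ℝ (uncurry f) (x, t) (1, 0) :=
  (HasFDerivAt.comp_hasDerivAt (f := fun y => (y, t)) x
    (differentiableAt_uncurry f (x, t)).hasFDerivAt
    ((hasDerivAt_id x).prodMk (hasDerivAt_const x t))).deriv

theorem pdt_eq_fderiv (x t : ℝ) : pdt f x t = fderiv ℝ (uncurry f) (x, t) (0, 1) :=
  (HasFDerivAt.comp_hasDerivAt (f := fun s => (x, s)) t
    (differentiableAt_uncurry f (x, t)).hasFDerivAt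
    ((hasDerivAt_const t x).prodMk (hasDerivAt_id t))).deriv

theorem uncurry_pdx : uncurry (pdx f) = fun p => fderiv ℝ (uncurry f) p (1, 0) :=
  funext fun p => pdx_eq_fderiv f p.1 p.2

theorem uncurry_pdt : uncurry (pdt f) = fun p => fderiv ℝ (uncurry f) p (0, 1) :=
  funext fun p => pdt_eq_fderiv f p.1 p.2

instance instPdx : JointlySmooth (pdx f) :=
  ⟨uncurry_pdx f ▸ (contDiff_fderiv f).clm_apply contDiff_const⟩

instance instPdt : JointlySmooth (pdt f) :=
  ⟨uncurry_pdt f ▸ (contDiff_fderiv f).clm_apply contDiff_const⟩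

theorem fderiv_fderiv_apply (p v w : ℝ × ℝ) :
    fderiv ℝ (fun q => fderiv ℝ (uncurry f) q v) p w =
      fderiv ℝ (fderiv ℝ (uncurry f)) p w v := by
  have hdiff := ((contDiff_fderiv f).differentiable (by simp) p).hasFDerivAt
  simp [(hdiff.clm_apply (hasFDerivAt_const v p)).fderiv]

theorem pdx_pdx_eq_fderiv (x t : ℝ) :
    pdx (pdx f) x t = fderiv ℝ (fderiv ℝ (uncurry f)) (x, t) (1, 0) (1, 0) := by
  rw [pdx_eq_fderiv, uncurry_pdx, fderiv_fderiv_apply]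

theorem pdt_pdx_eq_fderiv (x t : ℝ) :
    pdt (pdx f) x t = fderiv ℝ (fderiv ℝ (uncurry f)) (x, t) (0, 1) (1, 0) := by
  rw [pdt_eq_fderiv, uncurry_pdx, fderiv_fderiv_apply]

theorem pdt_pdx : pdt (pdx f) = pdx (pdt f) := by
  funext x t
  have hsymm : IsSymmSndFDerivAt ℝ (uncurry f) (x, t) :=
    hf.contDiff.contDiffAt.isSymmSndFDerivAt <| by
      rw [minSmoothness_of_isRCLikeNormedField]
      exact ENat.LEInfty.out
  rw [pdt_pdx_eq_fderiv, pdx_eq_fderiv, uncurry_pdt, fderiv_fderiv_apply, hsymm]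

variable (g : ℝ → ℝ → ℝ) [hg : JointlySmooth g] (c : ℝ)

instance instAdd : JointlySmooth (f + g) := ⟨hf.contDiff.add hg.contDiff⟩

instance instSub : JointlySmooth (f - g) := ⟨hf.contDiff.sub hg.contDiff⟩

instance instMul : JointlySmooth (f * g) := ⟨hf.contDiff.mul hg.contDiff⟩

instance instPow (n : ℕ) : JointlySmooth (f ^ n) := ⟨hf.contDiff.pow n⟩

instance instSMul : JointlySmooth (c • f) := ⟨hf.contDiff.const_smul c⟩

theorem pdx_add : pdx (f + g) = pdx f + pdx g :=
  funext₂ fun x t => ((hasDerivAt_left f x t).add (hasDerivAt_left g x t)).deriv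

theorem pdx_sub : pdx (f - g) = pdx f - pdx g :=
  funext₂ fun x t => ((hasDerivAt_left f x t).sub (hasDerivAt_left g x t)).deriv

theorem pdx_mul : pdx (f * g) = pdx f * g + f * pdx g :=
  funext₂ fun x t => ((hasDerivAt_left f x t).mul (hasDerivAt_left g x t)).deriv

theorem pdx_smul : pdx (c • f) = c • pdx f :=
  funext₂ fun x t => ((hasDerivAt_left f x t).const_smul c).deriv

theorem pdx_sq : pdx (f ^ 2) = (2 : ℝ) • (f * pdx f) := by
  rw [sq, pdx_mul, mul_comm, two_smul]

theorem pdt_add : pdt (f + g) = pdt f + pdt g :=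
  funext₂ fun x t => ((hasDerivAt_right f x t).add (hasDerivAt_right g x t)).deriv

theorem pdt_sub : pdt (f - g) = pdt f - pdt g :=
  funext₂ fun x t => ((hasDerivAt_right f x t).sub (hasDerivAt_right g x t)).deriv

theorem pdt_mul : pdt (f * g) = pdt f * g + f * pdt g :=
  funext₂ fun x t => ((hasDerivAt_right f x t).mul (hasDerivAt_right g x t)).deriv

theorem pdt_smul : pdt (c • f) = c • pdt f :=
  funext₂ fun x t => ((hasDerivAt_right f x t).const_smul c).deriv

theorem pdt_sq : pdt (f ^ 2) = (2 : ℝ) • (f * pdt f) := by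
  rw [sq, pdt_mul, mul_comm, two_smul]

variable {f} in
theorem pdt_eq_zero_of_eqOn_Icc {a b x : ℝ} (hab : a < b) (h : ∀ t ∈ Icc a b, f x t = 0) :
    ∀ t ∈ Icc a b, pdt f x t = 0 := fun t ht =>
  (uniqueDiffOn_Icc hab t ht).eq_deriv _ (hasDerivAt_right f x t).hasDerivWithinAt
    ((hasDerivWithinAt_const t (Icc a b) (0 : ℝ)).congr h (h t ht))

section Integral

variable (a b t : ℝ)

theorem integral_pdx : ∫ x in a..b, pdx f x t = f b t - f a t :=
  intervalIntegral.integral_eq_sub_of_hasDerivAt (fun x _ => hasDerivAt_left f x t)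
    ((continuous_left (pdx f) t).intervalIntegrable a b)

theorem continuous_integral : Continuous fun t => ∫ x in a..b, f x t :=
  intervalIntegral.continuous_parametric_intervalIntegral_of_continuous' (f := fun t x => f x t)
    ((continuous_uncurry f).comp continuous_swap) a b

theorem hasDerivAt_integral :
    HasDerivAt (fun s => ∫ x in a..b, f x s) (∫ x in a..b, pdt f x t) t := by
  obtain ⟨B, hB⟩ := (isCompact_uIcc.prod (isCompact_closedBall t 1)).exists_bound_of_continuousOn
    (s := uIcc a b ×ˢ Metric.closedBall t 1) (continuous_uncurry (pdt f)).continuousOn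
  exact (intervalIntegral.hasDerivAt_integral_of_dominated_loc_of_deriv_le (bound := fun _ => B)
    (Metric.closedBall_mem_nhds t one_pos)
    (.of_forall fun s => (continuous_left f s).aestronglyMeasurable)
    ((continuous_left f t).intervalIntegrable a b)
    (continuous_left (pdt f) t).aestronglyMeasurable
    (.of_forall fun x hx s hs => hB (x, s) ⟨uIoc_subset_uIcc hx, hs⟩)
    intervalIntegrable_const
    (.of_forall fun x _ s _ => hasDerivAt_right f x s)).2

theorem contDiff_integral : ContDiff ℝ 1 fun t => ∫ x in a..b, f x t := by
  refine contDiff_one_iff_deriv.2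
    ⟨fun t => (hasDerivAt_integral f a b t).differentiableAt, ?_⟩
  rw [funext fun t => (hasDerivAt_integral f a b t).deriv]
  exact continuous_integral (pdt f) a b

variable {f g a b t} in
theorem deriv_integral_of_balance {s : ℝ → ℝ → ℝ} [JointlySmooth s] (hab : a ≤ b)
    (hbal : ∀ x ∈ Icc a b, pdt f x t = pdx g x t + s x t) (hflux : g a t = g b t) :
    deriv (fun t => ∫ x in a..b, f x t) t = ∫ x in a..b, s x t := by
  calc deriv (fun t => ∫ x in a..b, f x t) t
      = ∫ x in a..b, pdt f x t := (hasDerivAt_integral f a b t).deriv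
    _ = ∫ x in a..b, (pdx g x t + s x t) :=
      intervalIntegral.integral_congr fun x hx => hbal x (uIcc_of_le hab ▸ hx)
    _ = (∫ x in a..b, pdx g x t) + ∫ x in a..b, s x t :=
      intervalIntegral.integral_add ((continuous_left (pdx g) t).intervalIntegrable a b)
        ((continuous_left s t).intervalIntegrable a b)
    _ = ∫ x in a..b, s x t := by rw [integral_pdx, hflux, sub_self, zero_add]

end Integral

end JointlySmooth

open JointlySmooth

theorem MBounded.abs_pdx_le {M L₀ L Th : ℝ} {f : ℝ → ℝ → ℝ} [JointlySmooth f]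
    (hM : MBounded M L₀ L Th f) {x t : ℝ} (hx : x ∈ Icc L₀ L) (ht : t ∈ Icc 0 Th) :
    |pdx f x t| ≤ M := by
  have hnorm := hM 1 (by norm_num) x hx t ht
  rw [norm_iteratedFDeriv_one] at hnorm
  rw [pdx_eq_fderiv, ← Real.norm_eq_abs]
  simpa using (fderiv ℝ (uncurry f) (x, t)).le_of_opNorm_le hnorm (1, 0)

theorem MBounded.abs_fderiv_fderiv_le {M L₀ L Th : ℝ} {f : ℝ → ℝ → ℝ}
    (hM : MBounded M L₀ L Th f) {x t : ℝ} (hx : x ∈ Icc L₀ L) (ht : t ∈ Icc 0 Th)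
    (v w : ℝ × ℝ) : |fderiv ℝ (fderiv ℝ (uncurry f)) (x, t) v w| ≤ M * ‖v‖ * ‖w‖ := by
  have hnorm := hM 2 (by norm_num) x hx t ht
  rw [← norm_iteratedFDeriv_fderiv, norm_iteratedFDeriv_one] at hnorm
  rw [← Real.norm_eq_abs]
  exact ContinuousLinearMap.le_of_opNorm₂_le_of_le _ hnorm le_rfl le_rfl

theorem MBounded.abs_pdx_pdx_le {M L₀ L Th : ℝ} {f : ℝ → ℝ → ℝ} [JointlySmooth f]
    (hM : MBounded M L₀ L Th f) {x t : ℝ} (hx : x ∈ Icc L₀ L) (ht : t ∈ Icc 0 Th) :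
    |pdx (pdx f) x t| ≤ M := by
  simpa [pdx_pdx_eq_fderiv] using hM.abs_fderiv_fderiv_le hx ht (1, 0) (1, 0)

theorem MBounded.abs_pdt_pdx_le {M L₀ L Th : ℝ} {f : ℝ → ℝ → ℝ} [JointlySmooth f]
    (hM : MBounded M L₀ L Th f) {x t : ℝ} (hx : x ∈ Icc L₀ L) (ht : t ∈ Icc 0 Th) :
    |pdt (pdx f) x t| ≤ M := by
  simpa [pdt_pdx_eq_fderiv] using hM.abs_fderiv_fderiv_le hx ht (0, 1) (1, 0)

/-! ### The multiplier method on a time interval -/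

theorem integral_le_of_le_add {a b c₁ c₂ : ℝ} {f g k : ℝ → ℝ} (hab : a ≤ b)
    (hf : Continuous f) (hg : Continuous g) (hk : Continuous k)
    (h : ∀ x ∈ Icc a b, k x ≤ c₁ * f x + c₂ * g x) :
    ∫ x in a..b, k x ≤ c₁ * (∫ x in a..b, f x) + c₂ * ∫ x in a..b, g x := by
  rw [← intervalIntegral.integral_const_mul, ← intervalIntegral.integral_const_mul,
    ← intervalIntegral.integral_add ((hf.const_mul c₁).intervalIntegrable a b)
      ((hg.const_mul c₂).intervalIntegrable a b)]
  exact intervalIntegral.integral_mono_on hab (hk.intervalIntegrable a b)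
    (((hf.const_mul c₁).add (hg.const_mul c₂)).intervalIntegrable a b) h

theorem abs_integral_le_of_abs_le_add {a b c₁ c₂ : ℝ} {f g k : ℝ → ℝ} (hab : a ≤ b)
    (hf : Continuous f) (hg : Continuous g) (hk : Continuous k)
    (h : ∀ x ∈ Icc a b, |k x| ≤ c₁ * f x + c₂ * g x) :
    |∫ x in a..b, k x| ≤ c₁ * (∫ x in a..b, f x) + c₂ * ∫ x in a..b, g x :=
  (intervalIntegral.abs_integral_le_integral_abs hab).trans
    (integral_le_of_le_add hab hf hg hk.abs h)

theorem integral_deriv_eq_sub_of_contDiff {f : ℝ → ℝ} (hf : ContDiff ℝ 1 f) (a b : ℝ) :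
    ∫ t in a..b, deriv f t = f b - f a :=
  intervalIntegral.integral_deriv_eq_sub (fun _ _ => hf.differentiable one_ne_zero _)
    ((hf.continuous_deriv le_rfl).intervalIntegrable a b)

theorem add_endpoints_le_two_mul_add_integral {a b : ℝ} {f g : ℝ → ℝ} (hf : ContDiff ℝ 1 f)
    (hg : Continuous g) (h : ∀ t ∈ Icc a b, |deriv f t| ≤ g t) {t : ℝ} (ht : t ∈ Icc a b) :
    f a + f b ≤ 2 * f t + ∫ s in a..b, g s := by
  have hf' : Continuous (deriv f) := hf.continuous_deriv le_rfl
  have hleft : ∫ s in a..t, -g s ≤ ∫ s in a..t, deriv f s :=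
    intervalIntegral.integral_mono_on ht.1 (hg.neg.intervalIntegrable _ _)
      (hf'.intervalIntegrable _ _) fun s hs => (abs_le.1 (h s ⟨hs.1, hs.2.trans ht.2⟩)).1
  have hright : ∫ s in t..b, deriv f s ≤ ∫ s in t..b, g s :=
    intervalIntegral.integral_mono_on ht.2 (hf'.intervalIntegrable _ _)
      (hg.intervalIntegrable _ _) fun s hs => (abs_le.1 (h s ⟨ht.1.trans hs.1, hs.2⟩)).2
  rw [intervalIntegral.integral_neg, integral_deriv_eq_sub_of_contDiff hf] at hleft
  rw [integral_deriv_eq_sub_of_contDiff hf] at hright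
  rw [← intervalIntegral.integral_add_adjacent_intervals
    (hg.intervalIntegrable a t) (hg.intervalIntegrable t b)]
  linarith

theorem length_mul_add_endpoints_le {a b : ℝ} {f g : ℝ → ℝ} (hab : a ≤ b)
    (hf : ContDiff ℝ 1 f) (hg : Continuous g) (h : ∀ t ∈ Icc a b, |deriv f t| ≤ g t) :
    (b - a) * (f a + f b) ≤ 2 * (∫ t in a..b, f t) + (b - a) * ∫ t in a..b, g t := by
  have hmono := integral_le_of_le_add (c₁ := 2) (c₂ := 1) hab hf.continuous
    (continuous_const (y := ∫ s in a..b, g s)) (continuous_const (y := f a + f b)) fun t ht => by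
      rw [one_mul]; exact add_endpoints_le_two_mul_add_integral hf hg h ht
  simpa only [intervalIntegral.integral_const, smul_eq_mul, one_mul] using hmono

/-- The estimates produced by the multiplier method on `[0, T]`: an energy `E`, a momentum `P`
(the pairing with the multiplier), a lower-order quantity `e` and an observation `d`, where all
errors are an `ε`-fraction of the energy plus a multiple of the observation. -/
structure MultiplierEstimates (T K C₁ ε C₂ : ℝ) (E P e d : ℝ → ℝ) : Prop where
  contDiff_energy : ContDiff ℝ 1 E
  contDiff_momentum : ContDiff ℝ 1 P
  contDiff_lowerOrder : ContDiff ℝ 1 e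
  continuous_obs : Continuous d
  energy_nonneg : ∀ t ∈ Icc 0 T, 0 ≤ E t
  obs_nonneg : ∀ t ∈ Icc 0 T, 0 ≤ d t
  lowerOrder_le_obs : ∀ t ∈ Icc 0 T, e t ≤ d t
  abs_deriv_energy_le : ∀ t ∈ Icc 0 T, |deriv E t| ≤ ε * E t + C₂ * d t
  deriv_momentum_add_energy_le : ∀ t ∈ Icc 0 T, deriv P t + E t ≤ ε * E t + C₂ * d t
  abs_deriv_lowerOrder_le : ∀ t ∈ Icc 0 T, |deriv e t| ≤ ε * E t + C₂ * d t
  abs_momentum_le : ∀ t ∈ Icc 0 T, |P t| ≤ K * E t + C₁ * e t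

namespace MultiplierEstimates

variable {T K C₁ ε C₂ : ℝ} {E P e d : ℝ → ℝ}

theorem integral_error (h : MultiplierEstimates T K C₁ ε C₂ E P e d) :
    ∫ t in 0..T, (ε * E t + C₂ * d t) =
      ε * (∫ t in 0..T, E t) + C₂ * ∫ t in 0..T, d t := by
  rw [intervalIntegral.integral_add
    ((h.contDiff_energy.continuous.const_mul ε).intervalIntegrable 0 T)
    ((h.continuous_obs.const_mul C₂).intervalIntegrable 0 T),
    intervalIntegral.integral_const_mul, intervalIntegral.integral_const_mul]

theorem continuous_error (h : MultiplierEstimates T K C₁ ε C₂ E P e d) :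
    Continuous fun t => ε * E t + C₂ * d t :=
  (h.contDiff_energy.continuous.const_mul ε).add (h.continuous_obs.const_mul C₂)

theorem energy_endpoints_le (h : MultiplierEstimates T K C₁ ε C₂ E P e d) (hT : 0 ≤ T) :
    T * (E 0 + E T) ≤
      2 * (∫ t in 0..T, E t) + T * (ε * (∫ t in 0..T, E t) + C₂ * ∫ t in 0..T, d t) := by
  simpa only [h.integral_error, sub_zero] using
    length_mul_add_endpoints_le hT h.contDiff_energy h.continuous_error h.abs_deriv_energy_le

theorem lowerOrder_endpoints_le (h : MultiplierEstimates T K C₁ ε C₂ E P e d) (hT : 0 ≤ T) :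
    T * (e 0 + e T) ≤
      2 * (∫ t in 0..T, d t) + T * (ε * (∫ t in 0..T, E t) + C₂ * ∫ t in 0..T, d t) := by
  have htrace := length_mul_add_endpoints_le hT h.contDiff_lowerOrder h.continuous_error
    h.abs_deriv_lowerOrder_le
  have hmono : ∫ t in 0..T, e t ≤ ∫ t in 0..T, d t :=
    intervalIntegral.integral_mono_on hT (h.contDiff_lowerOrder.continuous.intervalIntegrable _ _)
      (h.continuous_obs.intervalIntegrable _ _) h.lowerOrder_le_obs
  rw [h.integral_error, sub_zero] at htrace
  linarith

theorem integral_energy_le (h : MultiplierEstimates T K C₁ ε C₂ E P e d) (hT : 0 ≤ T) :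
    ∫ t in 0..T, E t ≤ K * (E 0 + E T) + C₁ * (e 0 + e T) +
      (ε * (∫ t in 0..T, E t) + C₂ * ∫ t in 0..T, d t) := by
  have hP' : Continuous (deriv P) := h.contDiff_momentum.continuous_deriv le_rfl
  have hEc := h.contDiff_energy.continuous
  have hmono := intervalIntegral.integral_mono_on (μ := volume) hT
    ((hP'.add hEc).intervalIntegrable 0 T) (h.continuous_error.intervalIntegrable 0 T)
    h.deriv_momentum_add_energy_le
  simp only [Pi.add_apply] at hmono
  rw [h.integral_error, intervalIntegral.integral_add (hP'.intervalIntegrable 0 T)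
    (hEc.intervalIntegrable 0 T), integral_deriv_eq_sub_of_contDiff h.contDiff_momentum] at hmono
  have hP0 := (abs_le.1 (h.abs_momentum_le 0 ⟨le_rfl, hT⟩)).2
  have hPT := (abs_le.1 (h.abs_momentum_le T ⟨hT, le_rfl⟩)).1
  linarith

/-- `ε` is the solution of `T (1 - ε (1 + C₁)) - (2 + T ε) K = (T - 2 K) / 2`, so that absorbing
the errors costs half of the gap `T - 2 K`. -/
theorem energy_add_energy_le (h : MultiplierEstimates T K C₁ ε C₂ E P e d) (hK : 0 ≤ K)
    (hC₁ : 0 ≤ C₁) (hC₂ : 0 ≤ C₂) (hε : 0 ≤ ε) (hKT : 2 * K < T)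
    (hεT : 2 * (ε * T * (1 + C₁ + K)) = T - 2 * K) :
    (T - 2 * K) / 2 * (E T + E 0) ≤
      ((2 + T * ε) * (C₁ * (2 / T + C₂) + C₂) + T * C₂) * ∫ t in 0..T, d t := by
  have hT : 0 < T := by linarith
  have hE := h.energy_endpoints_le hT.le
  have he := h.lowerOrder_endpoints_le hT.le
  have hI := h.integral_energy_le hT.le
  have hJ_nonneg : 0 ≤ ∫ t in 0..T, d t := intervalIntegral.integral_nonneg hT.le h.obs_nonneg
  set I := ∫ t in 0..T, E t
  set J := ∫ t in 0..T, d t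
  have he' : e 0 + e T ≤ (2 / T + C₂) * J + ε * I := by
    rw [← mul_le_mul_iff_right₀ hT]
    calc T * (e 0 + e T) ≤ 2 * J + T * (ε * I + C₂ * J) := he
      _ = T * ((2 / T + C₂) * J + ε * I) := by field_simp; ring
  have hI' : (1 - ε * (1 + C₁)) * I ≤ K * (E 0 + E T) + (C₁ * (2 / T + C₂) + C₂) * J := by
    linarith [mul_le_mul_of_nonneg_left he' hC₁]
  have hα_pos : 0 ≤ 1 - ε * (1 + C₁) := by
    have : 0 ≤ T * (1 - ε * (1 + C₁)) := by nlinarith [mul_nonneg (mul_nonneg hε hT.le) hK]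
    exact nonneg_of_mul_nonneg_right this hT
  have hα_le : 1 - ε * (1 + C₁) ≤ 1 := by linarith [mul_nonneg hε (by linarith : 0 ≤ 1 + C₁)]
  have hC₂J : (1 - ε * (1 + C₁)) * (T * C₂ * J) ≤ T * C₂ * J :=
    mul_le_of_le_one_left (by positivity) hα_le
  have hαE := mul_le_mul_of_nonneg_left hE hα_pos
  have hTI := mul_le_mul_of_nonneg_left hI' (by positivity : 0 ≤ 2 + T * ε)
  linear_combination hαE + hTI + hC₂J + (E 0 + E T) / 2 * hεT

end MultiplierEstimates

theorem exists_energy_le_of_multiplierEstimates {T K C₁ : ℝ} (hK : 0 ≤ K) (hC₁ : 0 ≤ C₁)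
    (hKT : 2 * K < T) :
    ∃ ε > 0, ∀ C₂ > 0, ∃ C > 0, ∀ E P e d : ℝ → ℝ, MultiplierEstimates T K C₁ ε C₂ E P e d →
      E T + E 0 ≤ C * ∫ t in 0..T, d t := by
  have hT : 0 < T := by linarith
  have hgap : 0 < T - 2 * K := by linarith
  set ε := (T - 2 * K) / (2 * (T * (1 + C₁ + K))) with hε_def
  have hε : 0 < ε := by positivity
  refine ⟨ε, hε, fun C₂ hC₂ =>
    ⟨((2 + T * ε) * (C₁ * (2 / T + C₂) + C₂) + T * C₂) / ((T - 2 * K) / 2), by positivity,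
      fun E P e d h => ?_⟩⟩
  rw [div_mul_eq_mul_div, le_div_iff₀' (by positivity)]
  exact h.energy_add_energy_le hK hC₁ hC₂.le hε.le hKT (by rw [hε_def]; field_simp)

/-! ### Balance laws of the linear beam system -/

/-- The positive physical constants of the beam. -/
structure BeamModuli where
  β : ℝ
  μ : ℝ
  lam : ℝ
  ρ : ℝ
  β_pos : 0 < β
  μ_pos : 0 < μ
  lam_pos : 0 < lam
  ρ_pos : 0 < ρ

/-- The multiplier `x - L` of the Rellich-type identity; it vanishes at the end `L`, where fewer
boundary conditions are available. -/
def multiplier (L : ℝ) : ℝ → ℝ → ℝ := fun x _ => x - L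

instance (L : ℝ) : JointlySmooth (multiplier L) := ⟨contDiff_fst.sub contDiff_const⟩

theorem pdx_multiplier (L : ℝ) : pdx (multiplier L) = 1 := by
  funext x t; simp [pdx, multiplier]

theorem pdt_multiplier (L : ℝ) : pdt (multiplier L) = 0 := by
  funext x t; simp [pdt, multiplier]

theorem abs_multiplier_le {L₀ L x : ℝ} (hx : x ∈ Icc L₀ L) (t : ℝ) :
    |multiplier L x t| ≤ L - L₀ := by
  rw [multiplier, abs_sub_comm, abs_of_nonneg (sub_nonneg.2 hx.2)]
  exact sub_le_sub_left hx.1 L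

section Densities

variable (w z a b : ℝ → ℝ → ℝ)

/-- The axial strain `z_x + a w_x` of the linear beam system with coefficient `a`. -/
abbrev axialStrain : ℝ → ℝ → ℝ := pdx z + a * pdx w

/-- The transverse force of the linear beam system with coefficients `a` and `b`. -/
abbrev transverseForce : ℝ → ℝ → ℝ := a * axialStrain w z a + b * pdx w

/-- The source in the energy balance, due to the variable coefficients. -/
abbrev energySource : ℝ → ℝ → ℝ :=
  pdt a * axialStrain w z a * pdx w - b * pdx w * pdx (pdt w)

/-- The lower-order part of the deflection, which controls the compact part of the momentum. -/
abbrev lowerOrderDensity : ℝ → ℝ → ℝ := pdx w ^ 2 + w ^ 2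

/-- The observed density. -/
abbrev obsDensity : ℝ → ℝ → ℝ := pdt w ^ 2 + pdx w ^ 2 + w ^ 2

/-- The products of `w_x` with quantities controlled by the energy, to which all error terms
reduce. -/
def crossTerms (x t : ℝ) : ℝ :=
  |pdx (pdt w) x t * pdx w x t| + |pdx (pdx w) x t * pdx w x t| +
    |axialStrain w z a x t * pdx w x t|

end Densities

namespace BeamModuli

variable (P : BeamModuli) (L : ℝ) (w z a b : ℝ → ℝ → ℝ)

/-- The larger of the reciprocal wave speeds: high-frequency bending waves travel at speed
`√(λ / μ)`, axial waves at speed `1 / √ρ`. -/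
def slowness : ℝ := √(max (P.μ / P.lam) P.ρ)

/-- The vertical shear; the first equation of the linear beam system is `β w_tt = shear_x`. -/
abbrev shear : ℝ → ℝ → ℝ :=
  P.μ • pdx (pdt (pdt w)) - P.lam • pdx (pdx (pdx w)) + transverseForce w z a b

/-- The linear beam system with variable coefficients `a` and `b`, at the point `(x, t)`. The time
difference of a solution of the von Karman system solves it with `a` and `b` time averages. -/
structure LinearBeamAt (x t : ℝ) : Prop where
  deflection : P.β * pdt (pdt w) x t = pdx (P.shear w z a b) x t
  axial : P.ρ * pdt (pdt z) x t = pdx (axialStrain w z a) x t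

/-- The energy per unit length. -/
abbrev energyDensity : ℝ → ℝ → ℝ :=
  (1 / 2 : ℝ) • (P.β • pdt w ^ 2 + P.μ • pdx (pdt w) ^ 2 + P.lam • pdx (pdx w) ^ 2
    + axialStrain w z a ^ 2 + P.ρ • pdt z ^ 2)

/-- The flux in the energy balance. -/
abbrev energyFlux : ℝ → ℝ → ℝ :=
  P.shear w z a b * pdt w + P.lam • (pdx (pdx w) * pdx (pdt w)) + axialStrain w z a * pdt z

/-- The momentum conjugate to the multipliers `(x - L) w_x - w` and `(x - L) z_x`, up to a total
`x`-derivative. -/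
abbrev momentumDensity : ℝ → ℝ → ℝ :=
  multiplier L * (P.β • (pdt w * pdx w) + P.μ • (pdx (pdt w) * pdx (pdx w))
    + P.ρ • (pdt z * pdx z)) - P.β • (pdt w * w)

/-- The flux in the momentum balance. -/
abbrev momentumFlux : ℝ → ℝ → ℝ :=
  multiplier L * P.energyDensity w z a + P.shear w z a b * (multiplier L * pdx w - w)
    - multiplier L * axialStrain w z a * a * pdx w

/-- The source in the momentum balance other than minus the energy. -/
abbrev momentumSource : ℝ → ℝ → ℝ :=
  axialStrain w z a * pdx w * (a + multiplier L * pdx a) - P.β • pdt w ^ 2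
    - b * multiplier L * pdx w * pdx (pdx w)

variable {P w z a b} [JointlySmooth w] [JointlySmooth z] [JointlySmooth a] [JointlySmooth b]
  {x t : ℝ}

theorem LinearBeamAt.pdt_energyDensity (h : P.LinearBeamAt w z a b x t) :
    pdt (P.energyDensity w z a) x t =
      pdx (P.energyFlux w z a b) x t + energySource w z a b x t := by
  obtain ⟨hdefl, haxial⟩ := h
  simp only [pdx_add, pdx_sub, pdx_mul, pdx_smul, pdt_add, pdt_mul, pdt_smul, pdt_sq, pdt_pdx,
    Pi.add_apply, Pi.sub_apply, Pi.mul_apply, Pi.smul_apply, smul_eq_mul] at hdefl haxial ⊢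
  linear_combination pdt w x t * hdefl + pdt z x t * haxial

theorem LinearBeamAt.pdt_momentumDensity (h : P.LinearBeamAt w z a b x t) :
    pdt (P.momentumDensity L w z) x t = pdx (P.momentumFlux L w z a b) x t +
      (P.momentumSource L w z a b - P.energyDensity w z a) x t := by
  obtain ⟨hdefl, haxial⟩ := h
  simp only [pdx_add, pdx_sub, pdx_mul, pdx_smul, pdx_sq, pdx_multiplier, pdt_add, pdt_sub,
    pdt_mul, pdt_smul, pdt_multiplier, pdt_pdx, Pi.add_apply, Pi.sub_apply, Pi.mul_apply,
    Pi.smul_apply, Pi.pow_apply, Pi.one_apply, Pi.zero_apply, smul_eq_mul] at hdefl haxial ⊢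
  linear_combination (multiplier L x t * pdx w x t - w x t) * hdefl
    + multiplier L x t * pdx z x t * haxial

end BeamModuli

/-- The overdetermined boundary conditions: a clamped end at `L₀` with vanishing bending moment and
axial strain, and a hinged end at `L`. -/
structure OverdeterminedBC (L₀ L T : ℝ) (w z : ℝ → ℝ → ℝ) : Prop where
  w_left : ∀ t ∈ Icc 0 T, w L₀ t = 0
  wx_left : ∀ t ∈ Icc 0 T, pdx w L₀ t = 0
  wxx_left : ∀ t ∈ Icc 0 T, pdx (pdx w) L₀ t = 0
  z_left : ∀ t ∈ Icc 0 T, z L₀ t = 0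
  zx_left : ∀ t ∈ Icc 0 T, pdx z L₀ t = 0
  w_right : ∀ t ∈ Icc 0 T, w L t = 0
  wxx_right : ∀ t ∈ Icc 0 T, pdx (pdx w) L t = 0
  z_right : ∀ t ∈ Icc 0 T, z L t = 0

namespace OverdeterminedBC

variable {P : BeamModuli} {L₀ L T t : ℝ} {w z : ℝ → ℝ → ℝ} [JointlySmooth w] [JointlySmooth z]

theorem energyFlux_eq (hbc : OverdeterminedBC L₀ L T w z) (hT : 0 < T) (ht : t ∈ Icc 0 T)
    (a b : ℝ → ℝ → ℝ) : P.energyFlux w z a b L₀ t = P.energyFlux w z a b L t := by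
  have hwt_left := pdt_eq_zero_of_eqOn_Icc hT hbc.w_left t ht
  have hwt_right := pdt_eq_zero_of_eqOn_Icc hT hbc.w_right t ht
  have hzt_left := pdt_eq_zero_of_eqOn_Icc hT hbc.z_left t ht
  have hzt_right := pdt_eq_zero_of_eqOn_Icc hT hbc.z_right t ht
  simp [hwt_left, hwt_right, hzt_left, hzt_right, hbc.wxx_left t ht, hbc.wxx_right t ht]

theorem momentumFlux_eq (hbc : OverdeterminedBC L₀ L T w z) (hT : 0 < T) (ht : t ∈ Icc 0 T)
    (a b : ℝ → ℝ → ℝ) : P.momentumFlux L w z a b L₀ t = P.momentumFlux L w z a b L t := by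
  have hwt_left := pdt_eq_zero_of_eqOn_Icc hT hbc.w_left t ht
  have hzt_left := pdt_eq_zero_of_eqOn_Icc hT hbc.z_left t ht
  have hwxt_left := pdt_eq_zero_of_eqOn_Icc hT hbc.wx_left t ht
  rw [pdt_pdx] at hwxt_left
  simp [multiplier, hwt_left, hzt_left, hwxt_left, hbc.w_left t ht, hbc.wx_left t ht,
    hbc.wxx_left t ht, hbc.zx_left t ht, hbc.w_right t ht]

end OverdeterminedBC

/-! ### Absorption of the error terms -/

theorem mul_abs_mul_le_add_sq {c k x y : ℝ} (hc : 0 < c) :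
    k * |x * y| ≤ c * x ^ 2 + k ^ 2 / (4 * c) * y ^ 2 := by
  have hsq : c * x ^ 2 + k ^ 2 / (4 * c) * y ^ 2 - k * |x * y| =
      (2 * c * |x| - k * |y|) ^ 2 / (4 * c) := by
    rw [abs_mul, ← sq_abs x, ← sq_abs y]; field_simp; ring
  have : 0 ≤ (2 * c * |x| - k * |y|) ^ 2 / (4 * c) := by positivity
  linarith

theorem mul_abs_mul_le_of_mul_sq_le {c k ε e d p q : ℝ} (hc : 0 < c) (hε : 0 < ε)
    (hp : c * p ^ 2 ≤ e) (hq : q ^ 2 ≤ d) :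
    k * |p * q| ≤ ε * e + k ^ 2 / (4 * (ε * c)) * d :=
  calc k * |p * q| ≤ ε * c * p ^ 2 + k ^ 2 / (4 * (ε * c)) * q ^ 2 :=
        mul_abs_mul_le_add_sq (by positivity)
    _ = ε * (c * p ^ 2) + k ^ 2 / (4 * (ε * c)) * q ^ 2 := by ring
    _ ≤ ε * e + k ^ 2 / (4 * (ε * c)) * d := by gcongr

theorem mul_abs_mul_le_half_mul {κ m n x y : ℝ} (hκ : 0 < κ) (hm : 0 ≤ m) (h : m ≤ κ ^ 2 * n) :
    m * |x * y| ≤ κ * (1 / 2 * (m * x ^ 2 + n * y ^ 2)) := by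
  rw [← mul_le_mul_iff_right₀ hκ, abs_mul, ← sq_abs x, ← sq_abs y]
  linear_combination 1 / 2 * m * sq_nonneg (κ * |x| - |y|) + 1 / 2 * |y| ^ 2 * h

theorem abs_mul_le_mul_abs {c p B : ℝ} (hc : |c| ≤ B) : |c * p| ≤ B * |p| := by
  rw [abs_mul]; gcongr

/-- A common bound `B` for the coefficients of the linear beam system and for the derivatives of
them that enter the sources. -/
structure CoeffBoundAt (B : ℝ) (a b : ℝ → ℝ → ℝ) (x t : ℝ) : Prop where
  abs_a_le : |a x t| ≤ B
  abs_pdx_a_le : |pdx a x t| ≤ B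
  abs_pdt_a_le : |pdt a x t| ≤ B
  abs_b_le : |b x t| ≤ B

section Sources

variable {P : BeamModuli} {B L l x t : ℝ} {w z a b : ℝ → ℝ → ℝ}

theorem crossTerms_nonneg : 0 ≤ crossTerms w z a x t := by
  unfold crossTerms; positivity

theorem obsDensity_nonneg : 0 ≤ obsDensity w x t := by
  simp only [Pi.add_apply, Pi.pow_apply]; positivity

theorem lowerOrderDensity_le_obsDensity : lowerOrderDensity w x t ≤ obsDensity w x t := by
  simp only [Pi.add_apply, Pi.pow_apply]
  linarith [sq_nonneg (pdt w x t)]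

theorem CoeffBoundAt.nonneg (h : CoeffBoundAt B a b x t) : 0 ≤ B :=
  (abs_nonneg _).trans h.abs_a_le

theorem CoeffBoundAt.abs_energySource_le (h : CoeffBoundAt B a b x t) :
    |energySource w z a b x t| ≤ B * crossTerms w z a x t := by
  have hB := h.nonneg
  calc |energySource w z a b x t|
      = |pdt a x t * (axialStrain w z a x t * pdx w x t)
          - b x t * (pdx (pdt w) x t * pdx w x t)| := by
        simp only [Pi.sub_apply, Pi.mul_apply]; ring_nf
    _ ≤ B * |axialStrain w z a x t * pdx w x t| + B * |pdx (pdt w) x t * pdx w x t| :=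
        (abs_sub _ _).trans
          (add_le_add (abs_mul_le_mul_abs h.abs_pdt_a_le) (abs_mul_le_mul_abs h.abs_b_le))
    _ ≤ B * crossTerms w z a x t := by
        unfold crossTerms; linarith [mul_nonneg hB (abs_nonneg (pdx (pdx w) x t * pdx w x t))]

theorem CoeffBoundAt.momentumSource_le (h : CoeffBoundAt B a b x t)
    (hm : |multiplier L x t| ≤ l) :
    P.momentumSource L w z a b x t ≤ (B + l * B) * crossTerms w z a x t := by
  have hB := h.nonneg
  have hl : 0 ≤ l := (abs_nonneg _).trans hm
  have hcoeff_strain : |a x t + multiplier L x t * pdx a x t| ≤ B + l * B :=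
    (abs_add_le _ _).trans <| add_le_add h.abs_a_le <|
      (abs_mul_le_mul_abs hm).trans (by gcongr; exact h.abs_pdx_a_le)
  have hcoeff_wxx : |b x t * multiplier L x t| ≤ B + l * B :=
    (abs_mul_le_mul_abs h.abs_b_le).trans (by nlinarith)
  have hstrain := (le_abs_self _).trans
    (abs_mul_le_mul_abs (p := axialStrain w z a x t * pdx w x t) hcoeff_strain)
  have hwxx := (neg_le_abs _).trans
    (abs_mul_le_mul_abs (p := pdx (pdx w) x t * pdx w x t) hcoeff_wxx)
  have hwt : 0 ≤ P.β * pdt w x t ^ 2 := mul_nonneg P.β_pos.le (sq_nonneg _)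
  have hwxt : 0 ≤ (B + l * B) * |pdx (pdt w) x t * pdx w x t| := by positivity
  simp only [crossTerms, Pi.sub_apply, Pi.add_apply, Pi.mul_apply, Pi.smul_apply, Pi.pow_apply,
    smul_eq_mul] at hstrain ⊢
  linarith

theorem abs_pdt_lowerOrderDensity_le [JointlySmooth w] :
    |pdt (lowerOrderDensity w) x t| ≤ 2 * crossTerms w z a x t + obsDensity w x t := by
  have hwwt : 2 * |w x t * pdt w x t| ≤ obsDensity w x t := by
    simp only [Pi.add_apply, Pi.pow_apply]
    rw [abs_mul]
    nlinarith [two_mul_le_add_sq |w x t| |pdt w x t|, sq_abs (w x t), sq_abs (pdt w x t),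
      sq_nonneg (pdx w x t)]
  calc |pdt (lowerOrderDensity w) x t|
      = |2 * (pdx (pdt w) x t * pdx w x t) + 2 * (w x t * pdt w x t)| := by
        simp only [pdt_add, pdt_sq, pdt_pdx, Pi.add_apply, Pi.smul_apply, Pi.mul_apply,
          smul_eq_mul, mul_comm (pdx w x t)]
    _ ≤ 2 * |pdx (pdt w) x t * pdx w x t| + 2 * |w x t * pdt w x t| := by
        refine (abs_add_le _ _).trans_eq ?_
        rw [abs_mul, abs_mul 2 (w x t * _), abs_two]
    _ ≤ 2 * crossTerms w z a x t + obsDensity w x t := by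
        unfold crossTerms
        linarith [abs_nonneg (pdx (pdx w) x t * pdx w x t),
          abs_nonneg (axialStrain w z a x t * pdx w x t)]

end Sources

namespace BeamModuli

variable (P : BeamModuli) (w z a : ℝ → ℝ → ℝ) (x t : ℝ)

theorem energyDensity_apply : P.energyDensity w z a x t =
    1 / 2 * (P.β * pdt w x t ^ 2 + P.μ * pdx (pdt w) x t ^ 2 + P.lam * pdx (pdx w) x t ^ 2
      + axialStrain w z a x t ^ 2 + P.ρ * pdt z x t ^ 2) := rfl

theorem energyDensity_nonneg : 0 ≤ P.energyDensity w z a x t := by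
  obtain ⟨β, μ, lam, ρ, hβ, hμ, hlam, hρ⟩ := P
  rw [energyDensity_apply]; positivity

theorem components_le_energyDensity :
    P.β / 2 * pdt w x t ^ 2 ≤ P.energyDensity w z a x t ∧
    P.μ / 2 * pdx (pdt w) x t ^ 2 ≤ P.energyDensity w z a x t ∧
    P.lam / 2 * pdx (pdx w) x t ^ 2 ≤ P.energyDensity w z a x t ∧
    1 / 2 * axialStrain w z a x t ^ 2 ≤ P.energyDensity w z a x t ∧
    P.ρ / 2 * pdt z x t ^ 2 ≤ P.energyDensity w z a x t := by
  have hwt := mul_nonneg P.β_pos.le (sq_nonneg (pdt w x t))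
  have hwxt := mul_nonneg P.μ_pos.le (sq_nonneg (pdx (pdt w) x t))
  have hwxx := mul_nonneg P.lam_pos.le (sq_nonneg (pdx (pdx w) x t))
  have hstrain := sq_nonneg (axialStrain w z a x t)
  have hzt := mul_nonneg P.ρ_pos.le (sq_nonneg (pdt z x t))
  rw [energyDensity_apply]
  refine ⟨?_, ?_, ?_, ?_, ?_⟩ <;> linarith

/-- `D` times the cross terms, plus the observation, is at most an `ε`-fraction of the energy plus
`C` times the observation. -/
def AbsorbsCrossTerms (D ε C : ℝ) (w z a : ℝ → ℝ → ℝ) : Prop :=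
  ∀ x t, D * crossTerms w z a x t + obsDensity w x t ≤
    ε * P.energyDensity w z a x t + C * obsDensity w x t

theorem exists_absorbsCrossTerms (D : ℝ) {ε : ℝ} (hε : 0 < ε) :
    ∃ C > 0, ∀ w z a : ℝ → ℝ → ℝ, P.AbsorbsCrossTerms D ε C w z a := by
  have hμ := P.μ_pos
  have hlam := P.lam_pos
  have hε3 : 0 < ε / 3 := by positivity
  refine ⟨D ^ 2 / (4 * (ε / 3 * (P.μ / 2))) + D ^ 2 / (4 * (ε / 3 * (P.lam / 2)))
    + D ^ 2 / (4 * (ε / 3 * (1 / 2))) + 1, by positivity, fun w z a x t => ?_⟩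
  obtain ⟨-, hwxt, hwxx, hstrain, -⟩ := P.components_le_energyDensity w z a x t
  have hwx : pdx w x t ^ 2 ≤ obsDensity w x t := by
    simp only [Pi.add_apply, Pi.pow_apply]
    linarith [sq_nonneg (pdt w x t), sq_nonneg (w x t)]
  have hwxt_wx := mul_abs_mul_le_of_mul_sq_le (k := D) (half_pos hμ) hε3 hwxt hwx
  have hwxx_wx := mul_abs_mul_le_of_mul_sq_le (k := D) (half_pos hlam) hε3 hwxx hwx
  have hstrain_wx := mul_abs_mul_le_of_mul_sq_le (k := D) one_half_pos hε3 hstrain hwx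
  unfold crossTerms
  linarith

section Absorbs

variable {P w z a} {D ε C : ℝ}

theorem AbsorbsCrossTerms.mul_crossTerms_le (h : P.AbsorbsCrossTerms D ε C w z a) {c x t : ℝ}
    (hc : c ≤ D) :
    c * crossTerms w z a x t ≤ ε * P.energyDensity w z a x t + C * obsDensity w x t :=
  (mul_le_mul_of_nonneg_right hc crossTerms_nonneg).trans <|
    (le_add_of_nonneg_right obsDensity_nonneg).trans (h x t)

theorem AbsorbsCrossTerms.abs_deriv_lowerOrder_le [JointlySmooth w] [JointlySmooth z]
    [JointlySmooth a] (h : P.AbsorbsCrossTerms D ε C w z a) {L₀ L t : ℝ} (hL : L₀ ≤ L)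
    (hD : 2 ≤ D) :
    |deriv (fun t => ∫ x in L₀..L, lowerOrderDensity w x t) t| ≤
      ε * (∫ x in L₀..L, P.energyDensity w z a x t) + C * ∫ x in L₀..L, obsDensity w x t := by
  rw [(hasDerivAt_integral (lowerOrderDensity w) L₀ L t).deriv]
  refine abs_integral_le_of_abs_le_add hL (continuous_left (P.energyDensity w z a) t)
    (continuous_left (obsDensity w) t) (continuous_left (pdt (lowerOrderDensity w)) t)
    fun x _ => (abs_pdt_lowerOrderDensity_le (z := z) (a := a)).trans (le_trans ?_ (h x t))
  gcongr
  exact crossTerms_nonneg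

end Absorbs

theorem slowness_pos : 0 < P.slowness := Real.sqrt_pos.2 (lt_max_of_lt_right P.ρ_pos)

theorem slowness_sq : P.slowness ^ 2 = max (P.μ / P.lam) P.ρ :=
  Real.sq_sqrt (le_max_of_le_right P.ρ_pos.le)

theorem leading_momentum_le : P.μ * |pdx (pdt w) x t * pdx (pdx w) x t|
    + P.ρ * |pdt z x t * axialStrain w z a x t| ≤ P.slowness * P.energyDensity w z a x t := by
  have hμ : P.μ ≤ P.slowness ^ 2 * P.lam :=
    (div_le_iff₀ P.lam_pos).1 (P.slowness_sq ▸ le_max_left _ _)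
  have hρ : P.ρ ≤ P.slowness ^ 2 * 1 := by rw [mul_one, slowness_sq]; exact le_max_right _ _
  have hbending := mul_abs_mul_le_half_mul (x := pdx (pdt w) x t) (y := pdx (pdx w) x t)
    P.slowness_pos P.μ_pos.le hμ
  have haxial := mul_abs_mul_le_half_mul (x := pdt z x t) (y := axialStrain w z a x t)
    P.slowness_pos P.ρ_pos.le hρ
  have hwt : 0 ≤ P.slowness * (P.β * pdt w x t ^ 2) :=
    mul_nonneg P.slowness_pos.le (mul_nonneg P.β_pos.le (sq_nonneg _))
  rw [energyDensity_apply]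
  linarith

variable {w z a x t} in
theorem abs_momentumDensity_le {B L l : ℝ} (ha : |a x t| ≤ B) (hm : |multiplier L x t| ≤ l) :
    |P.momentumDensity L w z x t| ≤
      l * (P.μ * |pdx (pdt w) x t * pdx (pdx w) x t| + P.ρ * |pdt z x t * axialStrain w z a x t|)
      + (l * P.β * |pdt w x t * pdx w x t| + l * B * P.ρ * |pdt z x t * pdx w x t|
        + P.β * |pdt w x t * w x t|) := by
  obtain ⟨β, μ, lam, ρ, hβ, hμ, hlam, hρ⟩ := P
  set m := multiplier L x t with hm_def
  have hl : 0 ≤ l := (abs_nonneg _).trans hm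
  have hma : |m * a x t| ≤ l * B := (abs_mul_le_mul_abs hm).trans (by gcongr)
  have habs (c : ℝ) (hc : 0 < c) (p q B' : ℝ) (hp : |p| ≤ B') :
      |c * (p * q)| ≤ c * (B' * |q|) := by
    rw [abs_mul, abs_of_pos hc]; gcongr; exact abs_mul_le_mul_abs hp
  have hsplit : (BeamModuli.mk β μ lam ρ hβ hμ hlam hρ).momentumDensity L w z x t =
      μ * (m * (pdx (pdt w) x t * pdx (pdx w) x t)) + ρ * (m * (pdt z x t * axialStrain w z a x t))
        + β * (m * (pdt w x t * pdx w x t)) - ρ * (m * a x t * (pdt z x t * pdx w x t))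
        - β * (1 * (pdt w x t * w x t)) := by
    simp only [Pi.sub_apply, Pi.add_apply, Pi.mul_apply, Pi.smul_apply, smul_eq_mul, ← hm_def]
    ring
  have hbending := habs μ hμ m (pdx (pdt w) x t * pdx (pdx w) x t) l hm
  have haxial := habs ρ hρ m (pdt z x t * axialStrain w z a x t) l hm
  have hwt_wx := habs β hβ m (pdt w x t * pdx w x t) l hm
  have hzt_wx := habs ρ hρ (m * a x t) (pdt z x t * pdx w x t) (l * B) hma
  have hwt_w := habs β hβ 1 (pdt w x t * w x t) 1 abs_one.le
  rw [hsplit]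
  refine ((abs_sub _ _).trans (add_le_add_left ((abs_sub _ _).trans (add_le_add_left
    (abs_add_three _ _ _) _)) _)).trans ?_
  linarith

theorem exists_abs_momentumDensity_le (B l : ℝ) {δ : ℝ} (hδ : 0 < δ) :
    ∃ C ≥ 0, ∀ (L : ℝ) (w z a : ℝ → ℝ → ℝ) (x t : ℝ), |a x t| ≤ B → |multiplier L x t| ≤ l →
      |P.momentumDensity L w z x t| ≤
        (l * P.slowness + δ) * P.energyDensity w z a x t + C * lowerOrderDensity w x t := by
  have hβ := P.β_pos
  have hρ := P.ρ_pos
  have hδ3 : 0 < δ / 3 := by positivity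
  refine ⟨(l * P.β) ^ 2 / (4 * (δ / 3 * (P.β / 2))) + (l * B * P.ρ) ^ 2 / (4 * (δ / 3 * (P.ρ / 2)))
    + P.β ^ 2 / (4 * (δ / 3 * (P.β / 2))), by positivity, fun L w z a x t ha hm => ?_⟩
  obtain ⟨hwt, -, -, -, hzt⟩ := P.components_le_energyDensity w z a x t
  have hwx : pdx w x t ^ 2 ≤ lowerOrderDensity w x t := le_add_of_nonneg_right (sq_nonneg _)
  have hw : w x t ^ 2 ≤ lowerOrderDensity w x t := le_add_of_nonneg_left (sq_nonneg _)
  have hlead := mul_le_mul_of_nonneg_left (P.leading_momentum_le w z a x t)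
    ((abs_nonneg _).trans hm)
  have hwt_wx := mul_abs_mul_le_of_mul_sq_le (k := l * P.β) (half_pos hβ) hδ3 hwt hwx
  have hzt_wx := mul_abs_mul_le_of_mul_sq_le (k := l * B * P.ρ) (half_pos hρ) hδ3 hzt hwx
  have hwt_w := mul_abs_mul_le_of_mul_sq_le (k := P.β) (half_pos hβ) hδ3 hwt hw
  linarith [P.abs_momentumDensity_le (w := w) (z := z) ha hm]

end BeamModuli

/-! ### Observability -/

/-- The linear beam system on `[L₀, L] × [0, T]` with coefficients bounded by `B` and with the
overdetermined boundary conditions. -/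
structure LinearBeamProblem (P : BeamModuli) (L₀ L T B : ℝ) (w z a b : ℝ → ℝ → ℝ) : Prop where
  eqn : ∀ x ∈ Icc L₀ L, ∀ t ∈ Icc 0 T, P.LinearBeamAt w z a b x t
  coeff : ∀ x ∈ Icc L₀ L, ∀ t ∈ Icc 0 T, CoeffBoundAt B a b x t
  bc : OverdeterminedBC L₀ L T w z

namespace LinearBeamProblem

variable {P : BeamModuli} {L₀ L T B : ℝ} {w z a b : ℝ → ℝ → ℝ}
  [JointlySmooth w] [JointlySmooth z] [JointlySmooth a] [JointlySmooth b]

theorem deriv_energy (h : LinearBeamProblem P L₀ L T B w z a b) (hL : L₀ ≤ L) (hT : 0 < T) {t : ℝ}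
    (ht : t ∈ Icc 0 T) :
    deriv (fun t => ∫ x in L₀..L, P.energyDensity w z a x t) t =
      ∫ x in L₀..L, energySource w z a b x t :=
  deriv_integral_of_balance hL (fun x hx => (h.eqn x hx t ht).pdt_energyDensity)
    (h.bc.energyFlux_eq hT ht a b)

theorem deriv_momentum_add_energy (h : LinearBeamProblem P L₀ L T B w z a b) (hL : L₀ ≤ L)
    (hT : 0 < T) {t : ℝ} (ht : t ∈ Icc 0 T) :
    deriv (fun t => ∫ x in L₀..L, P.momentumDensity L w z x t) t +
      ∫ x in L₀..L, P.energyDensity w z a x t = ∫ x in L₀..L, P.momentumSource L w z a b x t := by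
  rw [deriv_integral_of_balance hL (fun x hx => (h.eqn x hx t ht).pdt_momentumDensity L)
    (h.bc.momentumFlux_eq hT ht a b)]
  exact (eq_sub_iff_add_eq).1 <| intervalIntegral.integral_sub
    ((continuous_left (P.momentumSource L w z a b) t).intervalIntegrable L₀ L)
    ((continuous_left (P.energyDensity w z a) t).intervalIntegrable L₀ L)

theorem abs_deriv_energy_le {ε C : ℝ} (h : LinearBeamProblem P L₀ L T B w z a b) (hL : L₀ ≤ L)
    (hT : 0 < T) (habsorb : P.AbsorbsCrossTerms (2 + B + (L - L₀) * B) ε C w z a) {t : ℝ}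
    (ht : t ∈ Icc 0 T) :
    |deriv (fun t => ∫ x in L₀..L, P.energyDensity w z a x t) t| ≤
      ε * (∫ x in L₀..L, P.energyDensity w z a x t) + C * ∫ x in L₀..L, obsDensity w x t := by
  rw [h.deriv_energy hL hT ht]
  refine abs_integral_le_of_abs_le_add hL (continuous_left (P.energyDensity w z a) t)
    (continuous_left (obsDensity w) t) (continuous_left (energySource w z a b) t) fun x hx => ?_
  have hcoeff := h.coeff x hx t ht
  exact hcoeff.abs_energySource_le.trans <| habsorb.mul_crossTerms_le <| by
    linarith [mul_nonneg (sub_nonneg.2 hL) hcoeff.nonneg]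

theorem deriv_momentum_add_energy_le {ε C : ℝ} (h : LinearBeamProblem P L₀ L T B w z a b)
    (hL : L₀ ≤ L) (hT : 0 < T) (habsorb : P.AbsorbsCrossTerms (2 + B + (L - L₀) * B) ε C w z a)
    {t : ℝ} (ht : t ∈ Icc 0 T) :
    deriv (fun t => ∫ x in L₀..L, P.momentumDensity L w z x t) t +
        ∫ x in L₀..L, P.energyDensity w z a x t ≤
      ε * (∫ x in L₀..L, P.energyDensity w z a x t) + C * ∫ x in L₀..L, obsDensity w x t := by
  rw [h.deriv_momentum_add_energy hL hT ht]
  exact integral_le_of_le_add hL (continuous_left (P.energyDensity w z a) t)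
    (continuous_left (obsDensity w) t) (continuous_left (P.momentumSource L w z a b) t)
    fun x hx => ((h.coeff x hx t ht).momentumSource_le (abs_multiplier_le hx t)).trans
      (habsorb.mul_crossTerms_le (by linarith))

theorem multiplierEstimates {K C₁ ε C₂ : ℝ} (h : LinearBeamProblem P L₀ L T B w z a b)
    (hL : L₀ ≤ L) (hT : 0 < T) (habsorb : P.AbsorbsCrossTerms (2 + B + (L - L₀) * B) ε C₂ w z a)
    (hmomentum : ∀ x ∈ Icc L₀ L, ∀ t ∈ Icc 0 T, |P.momentumDensity L w z x t| ≤
      K * P.energyDensity w z a x t + C₁ * lowerOrderDensity w x t) :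
    MultiplierEstimates T K C₁ ε C₂
      (fun t => ∫ x in L₀..L, P.energyDensity w z a x t)
      (fun t => ∫ x in L₀..L, P.momentumDensity L w z x t)
      (fun t => ∫ x in L₀..L, lowerOrderDensity w x t)
      (fun t => ∫ x in L₀..L, obsDensity w x t) where
  contDiff_energy := contDiff_integral _ _ _
  contDiff_momentum := contDiff_integral _ _ _
  contDiff_lowerOrder := contDiff_integral _ _ _
  continuous_obs := continuous_integral _ _ _
  energy_nonneg t _ :=
    intervalIntegral.integral_nonneg hL fun x _ => P.energyDensity_nonneg w z a x t
  obs_nonneg _ _ := intervalIntegral.integral_nonneg hL fun _ _ => obsDensity_nonneg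
  lowerOrder_le_obs t _ := intervalIntegral.integral_mono_on hL
    ((continuous_left (lowerOrderDensity w) t).intervalIntegrable _ _)
    ((continuous_left (obsDensity w) t).intervalIntegrable _ _)
    fun _ _ => lowerOrderDensity_le_obsDensity
  abs_deriv_energy_le _ ht := h.abs_deriv_energy_le hL hT habsorb ht
  deriv_momentum_add_energy_le _ ht := h.deriv_momentum_add_energy_le hL hT habsorb ht
  abs_deriv_lowerOrder_le t ht := habsorb.abs_deriv_lowerOrder_le hL <| by
    have hB := (h.coeff L₀ (left_mem_Icc.2 hL) t ht).nonneg
    linarith [mul_nonneg (sub_nonneg.2 hL) hB]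
  abs_momentum_le t ht := abs_integral_le_of_abs_le_add hL
    (continuous_left (P.energyDensity w z a) t) (continuous_left (lowerOrderDensity w) t)
    (continuous_left (P.momentumDensity L w z) t) fun x hx => hmomentum x hx t ht

end LinearBeamProblem

theorem BeamModuli.exists_observability (P : BeamModuli) {L₀ L T : ℝ} (B : ℝ) (hL : L₀ ≤ L)
    (hT : 2 * (L - L₀) * P.slowness < T) :
    ∃ C > 0, ∀ (w z a b : ℝ → ℝ → ℝ) [JointlySmooth w] [JointlySmooth z] [JointlySmooth a]
      [JointlySmooth b], LinearBeamProblem P L₀ L T B w z a b →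
      (∫ x in L₀..L, P.energyDensity w z a x T) + ∫ x in L₀..L, P.energyDensity w z a x 0 ≤
        C * ∫ t in 0..T, ∫ x in L₀..L, obsDensity w x t := by
  have htravel : 0 ≤ (L - L₀) * P.slowness := mul_nonneg (sub_nonneg.2 hL) P.slowness_pos.le
  set δ := (T - 2 * (L - L₀) * P.slowness) / 4 with hδ_def
  have hδ : 0 < δ := by rw [hδ_def]; linarith
  obtain ⟨C₁, hC₁, hmomentum⟩ := P.exists_abs_momentumDensity_le B (L - L₀) hδ
  obtain ⟨ε, hε, hobs⟩ := exists_energy_le_of_multiplierEstimates (T := T)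
    (add_nonneg htravel hδ.le) hC₁ (by linarith)
  obtain ⟨C₂, hC₂, habsorb⟩ := P.exists_absorbsCrossTerms (2 + B + (L - L₀) * B) hε
  obtain ⟨C, hC, hle⟩ := hobs C₂ hC₂
  refine ⟨C, hC, fun w z a b _ _ _ _ h => hle _ _ _ _ <|
    h.multiplierEstimates hL (by linarith) (habsorb w z a) fun x hx t ht => ?_⟩
  exact hmomentum L w z a x t (h.coeff x hx t ht).abs_a_le (abs_multiplier_le hx t)

/-! ### Time differences of von Karman beams -/

/-- Time translation by `h`. -/
def tshift (h : ℝ) (f : ℝ → ℝ → ℝ) : ℝ → ℝ → ℝ := fun x t => f x (t + h)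

/-- The average of the values at times `t` and `t + h`, the companion of `tdiff` in the discrete
Leibniz rule. -/
def tmean (h : ℝ) (f : ℝ → ℝ → ℝ) : ℝ → ℝ → ℝ := (1 / 2 : ℝ) • (tshift h f + f)

theorem tdiff_eq_tshift_sub (h : ℝ) (f : ℝ → ℝ → ℝ) : tdiff h f = tshift h f - f := rfl

theorem tdiff_mul (h : ℝ) (f g : ℝ → ℝ → ℝ) :
    tdiff h (f * g) = tmean h f * tdiff h g + tmean h g * tdiff h f := by
  funext x t
  simp only [tdiff, tmean, tshift, Pi.add_apply, Pi.mul_apply, Pi.smul_apply, smul_eq_mul]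
  ring

theorem abs_tmean_le {h M x t : ℝ} {f : ℝ → ℝ → ℝ} (h₀ : |f x t| ≤ M) (h₁ : |f x (t + h)| ≤ M) :
    |tmean h f x t| ≤ M := by
  rw [abs_le] at h₀ h₁ ⊢
  simp only [tmean, tshift, Pi.add_apply, Pi.smul_apply, smul_eq_mul]
  constructor <;> linarith [h₀.1, h₀.2, h₁.1, h₁.2]

section TimeShift

variable (h : ℝ) (f : ℝ → ℝ → ℝ)

theorem pdx_tshift : pdx (tshift h f) = tshift h (pdx f) := rfl

theorem pdt_tshift : pdt (tshift h f) = tshift h (pdt f) :=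
  funext₂ fun x t => deriv_comp_add_const (f := fun s => f x s) h t

variable [hf : JointlySmooth f]

instance : JointlySmooth (tshift h f) :=
  ⟨hf.contDiff.comp (contDiff_fst.prodMk (contDiff_snd.add contDiff_const))⟩

instance : JointlySmooth (tdiff h f) := inferInstanceAs (JointlySmooth (tshift h f - f))

instance : JointlySmooth (tmean h f) :=
  inferInstanceAs (JointlySmooth ((1 / 2 : ℝ) • (tshift h f + f)))

theorem pdx_tdiff : pdx (tdiff h f) = tdiff h (pdx f) := by
  simp only [tdiff_eq_tshift_sub, pdx_sub, pdx_tshift]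

theorem pdt_tdiff : pdt (tdiff h f) = tdiff h (pdt f) := by
  simp only [tdiff_eq_tshift_sub, pdt_sub, pdt_tshift]

theorem pdx_tmean : pdx (tmean h f) = tmean h (pdx f) := by
  simp only [tmean, pdx_smul, pdx_add, pdx_tshift]

theorem pdt_tmean : pdt (tmean h f) = tmean h (pdt f) := by
  simp only [tmean, pdt_smul, pdt_add, pdt_tshift]

end TimeShift

/-- The axial force `v_x + u_x² / 2` of the von Karman beam. -/
abbrev axialForce (u v : ℝ → ℝ → ℝ) : ℝ → ℝ → ℝ := pdx v + (1 / 2 : ℝ) • (pdx u * pdx u)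

theorem abs_axialForce_le {u v : ℝ → ℝ → ℝ} {M x t : ℝ} (hu : |pdx u x t| ≤ M)
    (hv : |pdx v x t| ≤ M) : |axialForce u v x t| ≤ M + M ^ 2 / 2 := by
  have husq : |1 / 2 * (pdx u x t * pdx u x t)| ≤ M ^ 2 / 2 := by
    rw [abs_of_nonneg (mul_nonneg one_half_pos.le (mul_self_nonneg _))]
    nlinarith [sq_le_sq' (abs_le.1 hu).1 (abs_le.1 hu).2]
  exact (abs_add_le _ _).trans (add_le_add hv husq)

section TimeDifference

variable {P : BeamModuli} {L₀ L T h : ℝ} {u v : ℝ → ℝ → ℝ}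

theorem VKBeam.axial {β μ lam ρ Th x t : ℝ} (hvk : VKBeam β μ lam ρ L₀ L Th u v)
    (hx : x ∈ Icc L₀ L) (ht : t ∈ Icc 0 Th) :
    ρ * pdt (pdt v) x t = pdx (axialForce u v) x t := by
  have hforce : (fun y s => pdx v y s + pdx u y s ^ 2 / 2) = axialForce u v := by
    funext y s
    simp only [Pi.mul_apply, Pi.add_apply, Pi.smul_apply, smul_eq_mul]
    ring
  rw [← hforce]
  exact sub_eq_zero.1 (hvk x hx t ht).2

/-- `u_x`, its first derivatives, and `v_x` are bounded by `M` on `[L₀, L] × [0, Th]`; these are the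
bounds on which the coefficients of the linear system for the time difference depend. -/
structure SlopeBounded (M L₀ L Th : ℝ) (u v : ℝ → ℝ → ℝ) : Prop where
  abs_ux_le : ∀ x ∈ Icc L₀ L, ∀ t ∈ Icc 0 Th, |pdx u x t| ≤ M
  abs_uxx_le : ∀ x ∈ Icc L₀ L, ∀ t ∈ Icc 0 Th, |pdx (pdx u) x t| ≤ M
  abs_uxt_le : ∀ x ∈ Icc L₀ L, ∀ t ∈ Icc 0 Th, |pdt (pdx u) x t| ≤ M
  abs_vx_le : ∀ x ∈ Icc L₀ L, ∀ t ∈ Icc 0 Th, |pdx v x t| ≤ M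

variable [JointlySmooth u]

theorem SlopeBounded.coeffBoundAt {M : ℝ} (hM : SlopeBounded M L₀ L (T + h) u v) (hh : 0 ≤ h)
    {x t : ℝ} (hx : x ∈ Icc L₀ L) (ht : t ∈ Icc 0 T) :
    CoeffBoundAt (M + M ^ 2 / 2) (tmean h (pdx u)) (tmean h (axialForce u v)) x t := by
  have ht₀ : t ∈ Icc 0 (T + h) := ⟨ht.1, by linarith [ht.2]⟩
  have ht₁ : t + h ∈ Icc 0 (T + h) := ⟨by linarith [ht.1], by linarith [ht.2]⟩
  have hMle : M ≤ M + M ^ 2 / 2 := le_add_of_nonneg_right (by positivity)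
  refine ⟨?_, ?_, ?_, ?_⟩
  · exact (abs_tmean_le (hM.abs_ux_le x hx t ht₀) (hM.abs_ux_le x hx _ ht₁)).trans hMle
  · rw [pdx_tmean]
    exact (abs_tmean_le (hM.abs_uxx_le x hx t ht₀) (hM.abs_uxx_le x hx _ ht₁)).trans hMle
  · rw [pdt_tmean]
    exact (abs_tmean_le (hM.abs_uxt_le x hx t ht₀) (hM.abs_uxt_le x hx _ ht₁)).trans hMle
  · exact abs_tmean_le (abs_axialForce_le (hM.abs_ux_le x hx t ht₀) (hM.abs_vx_le x hx t ht₀))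
      (abs_axialForce_le (hM.abs_ux_le x hx _ ht₁) (hM.abs_vx_le x hx _ ht₁))

variable [JointlySmooth v]

theorem MBounded.slopeBounded {M Th : ℝ} (hu : MBounded M L₀ L Th u) (hv : MBounded M L₀ L Th v) :
    SlopeBounded M L₀ L Th u v where
  abs_ux_le _ hx _ ht := hu.abs_pdx_le hx ht
  abs_uxx_le _ hx _ ht := hu.abs_pdx_pdx_le hx ht
  abs_uxt_le _ hx _ ht := hu.abs_pdt_pdx_le hx ht
  abs_vx_le _ hx _ ht := hv.abs_pdx_le hx ht

theorem VKBeam.deflection {β μ lam ρ Th x t : ℝ} (hvk : VKBeam β μ lam ρ L₀ L Th u v)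
    (hx : x ∈ Icc L₀ L) (ht : t ∈ Icc 0 Th) :
    β * pdt (pdt u) x t = pdx (μ • pdx (pdt (pdt u)) - lam • pdx (pdx (pdx u))
      + pdx u * axialForce u v) x t := by
  have hforce : (fun y s => pdx u y s * (pdx v y s + pdx u y s ^ 2 / 2)) =
      pdx u * axialForce u v := by
    funext y s
    simp only [Pi.mul_apply, Pi.add_apply, Pi.smul_apply, smul_eq_mul]
    ring
  have heq := (hvk x hx t ht).1
  rw [hforce] at heq
  rw [pdx_add, pdx_sub, pdx_smul, pdx_smul]
  simp only [Pi.add_apply, Pi.sub_apply, Pi.smul_apply, smul_eq_mul]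
  linarith

theorem axialStrain_tdiff :
    axialStrain (tdiff h u) (tdiff h v) (tmean h (pdx u)) = tdiff h (axialForce u v) := by
  rw [axialStrain, pdx_tdiff, pdx_tdiff]
  funext x t
  simp only [tdiff, tmean, tshift, Pi.mul_apply, Pi.add_apply, Pi.smul_apply, smul_eq_mul]
  ring

theorem transverseForce_tdiff :
    transverseForce (tdiff h u) (tdiff h v) (tmean h (pdx u)) (tmean h (axialForce u v)) =
      tdiff h (pdx u * axialForce u v) := by
  rw [transverseForce, axialStrain_tdiff, pdx_tdiff, tdiff_mul]

theorem shear_tdiff :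
    P.shear (tdiff h u) (tdiff h v) (tmean h (pdx u)) (tmean h (axialForce u v)) =
      tdiff h (P.μ • pdx (pdt (pdt u)) - P.lam • pdx (pdx (pdx u)) + pdx u * axialForce u v) := by
  rw [BeamModuli.shear, transverseForce_tdiff]
  simp only [pdx_tdiff, pdt_tdiff]
  funext x t
  simp only [tdiff, Pi.add_apply, Pi.sub_apply, Pi.smul_apply, Pi.mul_apply, smul_eq_mul]
  ring

theorem VKBeam.linearBeamAt_tdiff (hvk : VKBeam P.β P.μ P.lam P.ρ L₀ L (T + h) u v) (hh : 0 ≤ h)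
    {x t : ℝ} (hx : x ∈ Icc L₀ L) (ht : t ∈ Icc 0 T) :
    P.LinearBeamAt (tdiff h u) (tdiff h v) (tmean h (pdx u)) (tmean h (axialForce u v)) x t := by
  have ht₀ : t ∈ Icc 0 (T + h) := ⟨ht.1, by linarith [ht.2]⟩
  have ht₁ : t + h ∈ Icc 0 (T + h) := ⟨by linarith [ht.1], by linarith [ht.2]⟩
  constructor
  · rw [shear_tdiff, pdx_tdiff, pdt_tdiff, pdt_tdiff, tdiff, tdiff, mul_sub,
      hvk.deflection hx ht₀, hvk.deflection hx ht₁]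
  · rw [axialStrain_tdiff, pdx_tdiff, pdt_tdiff, pdt_tdiff, tdiff, tdiff, mul_sub,
      hvk.axial hx ht₀, hvk.axial hx ht₁]

theorem Ed_eq_integral_energyDensity (t : ℝ) :
    Ed P.β P.μ P.lam P.ρ L₀ L h u v t =
      ∫ x in L₀..L, P.energyDensity (tdiff h u) (tdiff h v) (tmean h (pdx u)) x t := by
  have hstrain (x : ℝ) : pdx (tdiff h v) x t
      + 1 / 2 * pdx (tdiff h u) x t * (pdx u x (t + h) + pdx u x t) =
        axialStrain (tdiff h u) (tdiff h v) (tmean h (pdx u)) x t := by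
    simp only [tmean, tshift, Pi.add_apply, Pi.mul_apply, Pi.smul_apply, smul_eq_mul]
    ring
  have hsq (f : ℝ → ℝ → ℝ) [JointlySmooth f] :
      IntervalIntegrable (fun x => f x t ^ 2) volume L₀ L :=
    (continuous_left (f ^ 2) t).intervalIntegrable L₀ L
  have hwt := (hsq (pdt (tdiff h u))).const_mul P.β
  have hwxt := (hsq (pdx (pdt (tdiff h u)))).const_mul P.μ
  have hwxx := (hsq (pdx (pdx (tdiff h u)))).const_mul P.lam
  have hs := hsq (axialStrain (tdiff h u) (tdiff h v) (tmean h (pdx u)))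
  have hzt := (hsq (pdt (tdiff h v))).const_mul P.ρ
  simp only [Ed, hstrain, BeamModuli.energyDensity_apply, intervalIntegral.integral_const_mul]
  rw [intervalIntegral.integral_add (((hwt.add hwxt).add hwxx).add hs) hzt,
    intervalIntegral.integral_add ((hwt.add hwxt).add hwxx) hs,
    intervalIntegral.integral_add (hwt.add hwxt) hwxx, intervalIntegral.integral_add hwt hwxt]
  simp only [intervalIntegral.integral_const_mul]

end TimeDifference

theorem BeamModuli.two_mul_mul_slowness_lt (P : BeamModuli) {l T : ℝ} (hl : 0 ≤ l)
    (hT : 10 * l * √(P.μ / P.lam + P.ρ) < T) : 2 * l * P.slowness < T := by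
  have hslow : P.slowness ≤ √(P.μ / P.lam + P.ρ) :=
    Real.sqrt_le_sqrt (max_le_add_of_nonneg (div_pos P.μ_pos P.lam_pos).le P.ρ_pos.le)
  calc 2 * l * P.slowness ≤ 10 * l * √(P.μ / P.lam + P.ρ) := by
        have := P.slowness_pos.le
        gcongr
        norm_num
    _ < T := hT

theorem integral_obsDensity_le {L₀ L T : ℝ} (hL : L₀ ≤ L) (hT : 0 ≤ T) (w z : ℝ → ℝ → ℝ)
    [JointlySmooth w] [JointlySmooth z] :
    ∫ t in 0..T, ∫ x in L₀..L, obsDensity w x t ≤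
      ∫ t in 0..T, ∫ x in L₀..L, (obsDensity w + z ^ 2) x t := by
  refine intervalIntegral.integral_mono_on hT
    ((continuous_integral (obsDensity w) L₀ L).intervalIntegrable 0 T)
    ((continuous_integral (obsDensity w + z ^ 2) L₀ L).intervalIntegrable 0 T) fun t _ => ?_
  exact intervalIntegral.integral_mono_on hL
    ((continuous_left (obsDensity w) t).intervalIntegrable L₀ L)
    ((continuous_left (obsDensity w + z ^ 2) t).intervalIntegrable L₀ L)
    fun x _ => le_add_of_nonneg_right (sq_nonneg (z x t))

theorem stmt_16_general (P : BeamModuli) {L₀ L T h : ℝ} (M : ℝ) (hL : L₀ ≤ L) (hh : 0 ≤ h)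
    (hT : 2 * (L - L₀) * √(max (P.μ / P.lam) P.ρ) < T) :
    ∃ C > 0, ∀ (u v : ℝ → ℝ → ℝ) [JointlySmooth u] [JointlySmooth v],
      VKBeam P.β P.μ P.lam P.ρ L₀ L (T + h) u v → SlopeBounded M L₀ L (T + h) u v →
      OverdeterminedBC L₀ L T (tdiff h u) (tdiff h v) →
      Ed P.β P.μ P.lam P.ρ L₀ L h u v T + Ed P.β P.μ P.lam P.ρ L₀ L h u v 0 ≤
        C * ∫ t in 0..T, ∫ x in L₀..L, obsDensity (tdiff h u) x t := by
  obtain ⟨C, hC, hobs⟩ := P.exists_observability (M + M ^ 2 / 2) hL hT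
  refine ⟨C, hC, fun u v _ _ hvk hM hbc => ?_⟩
  rw [Ed_eq_integral_energyDensity, Ed_eq_integral_energyDensity]
  exact hobs (tdiff h u) (tdiff h v) (tmean h (pdx u)) (tmean h (axialForce u v))
    { eqn := fun x hx t ht => hvk.linearBeamAt_tdiff hh hx ht
      coeff := fun x hx t ht => hM.coeffBoundAt hh hx ht
      bc := hbc }

end

/-- Observability inequality (estimate (91) of the paper) for the time difference of
an `M`-bounded solution of the elastic von Karman beam system under the overdetermined
boundary conditions, provided `T > 10(L − L₀)(μ₂/λ₂ + ρ₂)^{1/2}`. -/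
theorem stmt_16 (L₀ L β₂ μ₂ lam₂ ρ₂ T h M : ℝ)
    (hL₀ : 0 < L₀) (hL : L₀ < L)
    (hβ₂ : 0 < β₂) (hμ₂ : 0 < μ₂) (hlam₂ : 0 < lam₂) (hρ₂ : 0 < ρ₂)
    (hT : 0 < T) (hh : 0 < h) (hM : 0 < M)
    (hTbig : T > 10 * (L - L₀) * Real.sqrt (μ₂ / lam₂ + ρ₂)) :
    ∃ C > (0:ℝ), ∀ u v : ℝ → ℝ → ℝ,
      (∀ n : ℕ, ContDiff ℝ n (Function.uncurry u)) →
      (∀ n : ℕ, ContDiff ℝ n (Function.uncurry v)) →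
      VKBeam β₂ μ₂ lam₂ ρ₂ L₀ L (T + h) u v →
      MBounded M L₀ L (T + h) u → MBounded M L₀ L (T + h) v →
      (∀ t ∈ Set.Icc (0:ℝ) T,
        tdiff h u L₀ t = 0 ∧ pdx (tdiff h u) L₀ t = 0 ∧
        pdx (pdx (tdiff h u)) L₀ t = 0 ∧ pdx (pdx (pdx (tdiff h u))) L₀ t = 0 ∧
        tdiff h v L₀ t = 0 ∧ pdx (tdiff h v) L₀ t = 0 ∧
        tdiff h u L t = 0 ∧ pdx (pdx (tdiff h u)) L t = 0 ∧ tdiff h v L t = 0) →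
      Ed β₂ μ₂ lam₂ ρ₂ L₀ L h u v T + Ed β₂ μ₂ lam₂ ρ₂ L₀ L h u v 0 ≤
        C * (∫ t in (0:ℝ)..T, (∫ x in L₀..L,
          ((pdt (tdiff h u) x t) ^ 2 + (pdx (tdiff h u) x t) ^ 2
            + (tdiff h u x t) ^ 2 + (tdiff h v x t) ^ 2))) := by
  let P : BeamModuli := ⟨β₂, μ₂, lam₂, ρ₂, hβ₂, hμ₂, hlam₂, hρ₂⟩
  have hTslow : 2 * (L - L₀) * P.slowness < T :=
    P.two_mul_mul_slowness_lt (sub_nonneg.2 hL.le) hTbig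
  obtain ⟨C, hC, hobs⟩ := stmt_16_general P M hL.le hh.le hTslow
  refine ⟨C, hC, fun u v hu hv hvk hMu hMv hbc => ?_⟩
  have : JointlySmooth u := ⟨contDiff_infty.2 hu⟩
  have : JointlySmooth v := ⟨contDiff_infty.2 hv⟩
  have hbc' : OverdeterminedBC L₀ L T (tdiff h u) (tdiff h v) := by
    constructor <;> intro t ht <;> simp only [hbc t ht]
  exact (hobs u v hvk (hMu.slopeBounded hMv) hbc').trans <| mul_le_mul_of_nonneg_left
    (integral_obsDensity_le hL.le hT.le (tdiff h u) (tdiff h v)) hC.le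
end
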